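/- arXiv:2603.21773 — 10 statements merged into one kernel-verified Lean document; each statement's English description precedes it below -/
import Mathlib

section
/- Let m ≥ 1 be an integer, θ0 ∈ (0, π/(2m)), and let L ∈ A be invertible with σ(L) ⊆ S(θ0). Then for every z ∈ S(θ0), the spectrum of the element ∑_{k=0}^{m-1} z^{k+1-m} (L^{-1})^k is contained in the open right half-plane {w ∈ ℂ : Re w > 0}; in particular the geometric sum G_m(z L^{-1}) := ∑_{k=0}^{m-1} (z L^{-1})^k is invertible in A. -/
open Complex

/-- The closed sector (origin removed) of half-angle `θ0` around the positive real axis: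
`S(θ0) = {ρ e^{iθ} : ρ > 0, |θ| ≤ θ0}`. -/
def sector (θ0 : ℝ) : Set ℂ :=
  {z : ℂ | ∃ ρ θ : ℝ, 0 < ρ ∧ |θ| ≤ θ0 ∧ z = ρ * Complex.exp (θ * Complex.I)}

lemma sector_term_re_pos (m k : ℕ) (hk : k < m) (θ0 : ℝ)
    (hθ0' : θ0 < Real.pi / (2 * m)) (z w : ℂ) (hz : z ∈ sector θ0) (hw : w ∈ sector θ0) :
    0 < (z ^ ((k : ℤ) + 1 - m) * w⁻¹ ^ k).re := by
  obtain ⟨r, s, hr, hs, rfl⟩ := hz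
  obtain ⟨ρ, t, hρ, ht, rfl⟩ := hw
  have key : ((r : ℂ) * Complex.exp (s * I)) ^ ((k : ℤ) + 1 - m) *
      ((ρ : ℂ) * Complex.exp (t * I))⁻¹ ^ k =
      ((r ^ ((k : ℤ) + 1 - m) * ρ⁻¹ ^ k : ℝ) : ℂ) *
        Complex.exp (((((k : ℝ) + 1 - m) * s - k * t : ℝ) : ℂ) * I) := by
    rw [mul_zpow, mul_inv, mul_pow, ← Complex.exp_neg, ← Complex.exp_nat_mul,
      ← Complex.exp_int_mul]
    have : (((((k : ℝ) + 1 - m) * s - k * t : ℝ) : ℂ) * I) =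
      (((k : ℤ) + 1 - m : ℤ) : ℂ) * (s * I) + (k : ℂ) * (-(t * I)) := by
      push_cast; ring
    rw [this, Complex.exp_add]
    push_cast
    ring
  rw [key, Complex.re_ofReal_mul, Complex.exp_ofReal_mul_I_re]
  apply mul_pos (by positivity)
  have hm : (0 : ℝ) < m := by exact_mod_cast (Nat.zero_le k).trans_lt hk
  have hkm : (k : ℝ) + 1 ≤ m := by exact_mod_cast hk
  have hk0 : (0 : ℝ) ≤ k := Nat.cast_nonneg k
  rw [lt_div_iff₀ (by positivity)] at hθ0'
  have h0 : 0 ≤ θ0 := (abs_nonneg _).trans hs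
  rw [abs_le] at hs ht
  have e1 := mul_le_mul_of_nonneg_left hs.1 (sub_nonneg.2 hkm)
  have e2 := mul_le_mul_of_nonneg_left hs.2 (sub_nonneg.2 hkm)
  have e3 := mul_le_mul_of_nonneg_left ht.1 hk0
  have e4 := mul_le_mul_of_nonneg_left ht.2 hk0
  have hb : (m - 1) * θ0 < Real.pi / 2 := by nlinarith
  apply Real.cos_pos_of_mem_Ioo
  constructor <;> nlinarith

/-- Let `A` be a complex unital Banach algebra, `m ≥ 1`,
`θ0 ∈ (0, π/(2m))`, and let `L ∈ A` be invertible with `σ(L) ⊆ S(θ0)`. Then for every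
`z ∈ S(θ0)`, the spectrum of `∑_{k=0}^{m-1} z^{k+1-m} (L⁻¹)^k` is contained in the open
right half-plane; in particular `G_m(zL⁻¹) = ∑_{k=0}^{m-1} (zL⁻¹)^k` is invertible. -/
theorem stmt1 {A : Type*} [NormedRing A] [NormedAlgebra ℂ A] [CompleteSpace A]
    (m : ℕ) (hm : 1 ≤ m) (θ0 : ℝ) (hθ0 : 0 < θ0) (hθ0' : θ0 < Real.pi / (2 * m))
    (L : A) (hL : IsUnit L) (hσ : spectrum ℂ L ⊆ sector θ0) :
    ∀ z ∈ sector θ0,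
      spectrum ℂ (∑ k ∈ Finset.range m, (z ^ ((k : ℤ) + 1 - m)) • (Ring.inverse L) ^ k)
        ⊆ {w : ℂ | 0 < w.re} ∧
      IsUnit (∑ k ∈ Finset.range m, (z • Ring.inverse L) ^ k) := by
  intro z hz
  nontriviality A
  have hz0 : z ≠ 0 := by
    obtain ⟨r, s, hr, -, rfl⟩ := hz
    exact mul_ne_zero (by exact_mod_cast hr.ne') (Complex.exp_ne_zero _)
  have main : spectrum ℂ
      (∑ k ∈ Finset.range m, (z ^ ((k : ℤ) + 1 - m)) • (Ring.inverse L) ^ k)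
        ⊆ {w : ℂ | 0 < w.re} := by
    obtain ⟨u, rfl⟩ := hL
    rw [Ring.inverse_unit]
    have hp : (∑ k ∈ Finset.range m, (z ^ ((k : ℤ) + 1 - m)) • ((u⁻¹ : Aˣ) : A) ^ k) =
        Polynomial.aeval ((u⁻¹ : Aˣ) : A) (∑ k ∈ Finset.range m,
          Polynomial.C (z ^ ((k : ℤ) + 1 - m)) * Polynomial.X ^ k) := by
      simp [map_sum, Algebra.smul_def]
    rw [hp, spectrum.map_polynomial_aeval_of_nonempty _ _ (spectrum.nonempty _)]
    rintro _ ⟨v, hv, rfl⟩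
    rw [← spectrum.map_inv, Set.mem_inv] at hv
    have hw := hσ hv
    simp only [Set.mem_ofPred_eq, Polynomial.eval_finsetSum, Polynomial.eval_mul,
      Polynomial.eval_C, Polynomial.eval_pow, Polynomial.eval_X, Complex.re_sum]
    apply Finset.sum_pos
    · intro k hk
      have := sector_term_re_pos m k (Finset.mem_range.1 hk) θ0 hθ0' z _ hz hw
      rwa [inv_inv] at this
    · exact ⟨0, Finset.mem_range.2 hm⟩
  refine ⟨main, ?_⟩
  have hu := spectrum.zero_notMem_iff ℂ |>.1 (fun h => by simpa using main h)
  have he : (∑ k ∈ Finset.range m, (z • Ring.inverse L) ^ k) =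
      (Units.mk0 z hz0 ^ ((m : ℤ) - 1)) •
        (∑ k ∈ Finset.range m, (z ^ ((k : ℤ) + 1 - m)) • (Ring.inverse L) ^ k) := by
    rw [Finset.smul_sum]
    refine Finset.sum_congr rfl fun k _ => ?_
    rw [Units.smul_def, smul_smul, smul_pow, Units.val_zpow_eq_zpow_val, Units.val_mk0,
      ← zpow_add₀ hz0, ← zpow_natCast z k]
    congr 2
    ring
  rw [he]
  exact hu.smul _
end

section
/- Let m ≥ 1 be an integer, θ0 ∈ (0, π/(2m)), and let L ∈ A be invertible with σ(L) ⊆ S(θ0). Then for every z ∈ S(θ0) with z ∉ σ(L), the elements L − z, L^{-m} − z^{-m} and G_m(zL^{-1}) := ∑_{k=0}^{m-1} (zL^{-1})^k are all invertible, and the following resolvent identities hold: (L − z)^{-1} = −z^{-m} · L^{-1} · G_m(zL^{-1}) · (L^{-m} − z^{-m})^{-1}, and (L − z)^{-1} = −z^{-1}·1 − m z^{-1-m} (L^{-m} − z^{-m})^{-1} − z^{-1} ∑_{k=1}^{m-1} G_k(zL^{-1}) · G_m(zL^{-1})^{-1}. -/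
lemma aux_scalar (m : ℕ) (hm : 1 ≤ m) (θ0 : ℝ) (hθ0' : θ0 < Real.pi / (2 * m))
    (z w : ℂ) (hz : z ∈ sector θ0) (hw : z / w ∈ sector θ0) (hw0 : w ≠ 0) :
    ∑ k ∈ Finset.range m, w ^ k ≠ 0 := by
  obtain ⟨ρ, θ, hρ, hθ, rfl⟩ := hz
  obtain ⟨r, φ, hr, hφ, h⟩ := hw
  have hmpos : (0 : ℝ) < m := by exact_mod_cast hm
  have hrC : (r : ℂ) ≠ 0 := by exact_mod_cast hr.ne'
  have hweq : w = ((ρ / r : ℝ) : ℂ) * Complex.exp (((θ - φ : ℝ) : ℂ) * Complex.I) := by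
    rw [div_eq_iff hw0] at h
    push_cast
    rw [sub_mul, Complex.exp_sub, div_mul_div_comm, h]
    field_simp
  intro h0
  have hwm : w ^ m = 1 := by
    have := geom_sum_mul w m
    rw [h0, zero_mul] at this
    exact (sub_eq_zero.mp this.symm)
  have hpos : 0 < ρ / r := div_pos hρ hr
  have hb : |(m : ℝ) * (θ - φ)| < Real.pi := by
    rw [abs_mul, abs_of_pos hmpos]
    have h1 : |θ - φ| ≤ 2 * θ0 := by
      have := abs_sub θ φ
      linarith
    rw [lt_div_iff₀ (by positivity)] at hθ0'
    nlinarith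
  have him : Real.sin ((m : ℝ) * (θ - φ)) = 0 := by
    rw [hweq, mul_pow, ← Complex.exp_nat_mul] at hwm
    have h2 : (((ρ / r) ^ m : ℝ) : ℂ) * Complex.exp (((m * (θ - φ) : ℝ) : ℂ) * Complex.I) = 1 := by
      rw [← hwm]; push_cast; ring_nf
    have h3 := congrArg Complex.im h2
    rw [Complex.im_ofReal_mul, Complex.exp_ofReal_mul_I_im, Complex.one_im] at h3
    rcases mul_eq_zero.mp h3 with h4 | h4
    · exact absurd h4 (pow_pos hpos m).ne'
    · exact h4
  have hz0 := (Real.sin_eq_zero_iff_of_lt_of_lt (abs_lt.mp hb).1 (abs_lt.mp hb).2).mp him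
  have hd : θ - φ = 0 := by
    rcases mul_eq_zero.mp hz0 with h4 | h4
    · exact absurd h4 hmpos.ne'
    · exact h4
  rw [hd] at hweq
  simp only [Complex.ofReal_zero, zero_mul, Complex.exp_zero, mul_one] at hweq
  rw [hweq] at h0
  have h5 : ∑ k ∈ Finset.range m, (ρ / r) ^ k = 0 := by exact_mod_cast h0
  have h6 : 0 < ∑ k ∈ Finset.range m, (ρ / r) ^ k :=
    Finset.sum_pos (fun i _ => pow_pos hpos i) (by simpa using by omega)
  exact h6.ne' h5

lemma aux_sum {A : Type*} [Ring A] (T : A) (m : ℕ) (hm : 1 ≤ m) :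
    T * (∑ k ∈ Finset.range m, T ^ k) = (T ^ m - 1) + (m : A) +
      ∑ k ∈ Finset.Ico 1 m, (T ^ k - 1) := by
  induction m, hm using Nat.le_induction with
  | base => simp
  | succ n hn ih =>
    rw [Finset.sum_range_succ, mul_add, ih, Finset.sum_Ico_succ_top hn, ← pow_succ']
    push_cast
    abel

lemma aux_inv {A : Type*} [Ring A] {x y : A} (h : x * y = 1) (h' : y * x = 1) :
    IsUnit x ∧ Ring.inverse x = y :=
  ⟨⟨⟨x, y, h, h'⟩, rfl⟩, Ring.inverse_unit ⟨x, y, h, h'⟩⟩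

lemma aux_unit {A : Type*} [NormedRing A] [NormedAlgebra ℂ A] [CompleteSpace A]
    (m : ℕ) (hm : 1 ≤ m) (θ0 : ℝ) (hθ0' : θ0 < Real.pi / (2 * m))
    (u : Aˣ) (hσ : spectrum ℂ (u : A) ⊆ sector θ0) (z : ℂ) (hz : z ∈ sector θ0) (hz0 : z ≠ 0) :
    IsUnit (∑ k ∈ Finset.range m, (z • (↑u⁻¹ : A)) ^ k) := by
  rcases subsingleton_or_nontrivial A with hA | hA
  · exact isUnit_of_subsingleton _
  by_contra hn
  set T : A := z • (↑u⁻¹ : A) with hT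
  let p : Polynomial ℂ := ∑ k ∈ Finset.range m, Polynomial.X ^ k
  have hp : Polynomial.aeval T p = ∑ k ∈ Finset.range m, T ^ k := by simp [p]
  have h0 : (0 : ℂ) ∈ spectrum ℂ (Polynomial.aeval T p) := by
    rw [spectrum.zero_mem_iff, hp]; exact hn
  rw [spectrum.map_polynomial_aeval] at h0
  obtain ⟨w, hw, hw'⟩ := h0
  have hTu : IsUnit T := by
    rw [hT]; exact (aux_inv (y := z⁻¹ • (u : A)) (by simp [smul_smul, hz0]) (by simp [smul_smul, hz0])).1
  have hw0 : w ≠ 0 := by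
    rintro rfl
    exact (spectrum.zero_mem_iff ℂ).mp hw hTu
  refine aux_scalar m hm θ0 hθ0' z w hz (hσ ?_) hw0 (by simpa [p, Polynomial.eval_finsetSum] using hw')
  rw [spectrum.mem_iff] at hw ⊢
  intro hu
  apply hw
  have : algebraMap ℂ A w - T = (-w) • ((↑u⁻¹ : A) * (algebraMap ℂ A (z / w) - u)) := by
    simp only [Algebra.algebraMap_eq_smul_one, mul_sub, Units.inv_mul, smul_sub, mul_smul_comm,
      mul_one, smul_smul, hT]
    have : -w * (z / w) = -z := by field_simp
    rw [this]
    simp only [neg_smul]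
    abel
  rw [this]
  exact (IsUnit.smul (Units.mk0 (-w) (neg_ne_zero.mpr hw0)) ((u⁻¹).isUnit.mul hu))

/-- Let `A` be a complex unital Banach algebra, `m ≥ 1`,
`θ0 ∈ (0, π/(2m))`, and `L ∈ A` invertible with `σ(L) ⊆ S(θ0)`. Then for every
`z ∈ S(θ0)` with `z ∉ σ(L)`, the elements `L - z`, `L^{-m} - z^{-m}` and
`G_m(zL⁻¹) = ∑_{k=0}^{m-1} (zL⁻¹)^k` are all invertible, and
`(L - z)⁻¹ = -z^{-m} • (L⁻¹ * G_m(zL⁻¹) * (L^{-m} - z^{-m})⁻¹)` and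
`(L - z)⁻¹ = -z⁻¹ • 1 - (m z^{-1-m}) • (L^{-m} - z^{-m})⁻¹
  - z⁻¹ • ∑_{k=1}^{m-1} G_k(zL⁻¹) * G_m(zL⁻¹)⁻¹`. -/
theorem stmt3 {A : Type*} [NormedRing A] [NormedAlgebra ℂ A] [CompleteSpace A]
    (m : ℕ) (hm : 1 ≤ m) (θ0 : ℝ) (hθ0 : 0 < θ0) (hθ0' : θ0 < Real.pi / (2 * m))
    (L : A) (hL : IsUnit L) (hσ : spectrum ℂ L ⊆ sector θ0) :
    ∀ z ∈ sector θ0, z ∉ spectrum ℂ L →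
      IsUnit (L - z • (1 : A)) ∧
      IsUnit ((Ring.inverse L) ^ m - (z ^ (-(m : ℤ))) • (1 : A)) ∧
      IsUnit (∑ k ∈ Finset.range m, (z • Ring.inverse L) ^ k) ∧
      Ring.inverse (L - z • (1 : A)) =
        (-(z ^ (-(m : ℤ)))) •
          (Ring.inverse L * (∑ k ∈ Finset.range m, (z • Ring.inverse L) ^ k) *
            Ring.inverse ((Ring.inverse L) ^ m - (z ^ (-(m : ℤ))) • (1 : A))) ∧
      Ring.inverse (L - z • (1 : A)) =
        (-z⁻¹) • (1 : A)
          - ((m : ℂ) * z ^ (-1 - (m : ℤ))) •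
              Ring.inverse ((Ring.inverse L) ^ m - (z ^ (-(m : ℤ))) • (1 : A))
          - z⁻¹ •
              ∑ k ∈ Finset.Ico 1 m,
                (∑ j ∈ Finset.range k, (z • Ring.inverse L) ^ j) *
                  Ring.inverse (∑ j ∈ Finset.range m, (z • Ring.inverse L) ^ j) := by
  intro z hz hzσ
  have hz0 : z ≠ 0 := by
    obtain ⟨ρ, θ, hρ, -, rfl⟩ := hz
    exact mul_ne_zero (by exact_mod_cast hρ.ne') (Complex.exp_ne_zero _)
  obtain ⟨u, rfl⟩ := hL
  rw [Ring.inverse_unit]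
  have hG := aux_unit m hm θ0 hθ0' u hσ z hz hz0
  set T : A := z • (↑u⁻¹ : A) with hT
  have huT : (↑u⁻¹ : A) = z⁻¹ • T := by rw [hT, smul_smul, inv_mul_cancel₀ hz0, one_smul]
  have hut : (u : A) - z • (1 : A) = -((u : A) * (T - 1)) := by
    rw [hT, mul_sub, mul_smul_comm, Units.mul_inv, mul_one]; abel
  have h1 : IsUnit ((u : A) - z • (1 : A)) := by
    rw [spectrum.mem_iff, not_not, Algebra.algebraMap_eq_smul_one] at hzσ
    simpa using hzσ.neg
  have ht : IsUnit (T - 1) := by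
    have h2 := h1
    rw [hut, IsUnit.neg_iff, Units.isUnit_units_mul] at h2
    exact h2
  obtain ⟨g, hg⟩ := hG
  obtain ⟨t, ht⟩ := ht
  have hgt : (g : A) * t = T ^ m - 1 := by rw [hg, ht, geom_sum_mul]
  have htg : (t : A) * g = T ^ m - 1 := by rw [hg, ht, mul_geom_sum]
  have hTt : Commute T (t : A) := by
    rw [ht]; exact (Commute.refl T).sub_right (Commute.one_right T)
  have hTti : Commute T (↑t⁻¹ : A) := hTt.units_inv_right
  have hzm : z ^ m ≠ 0 := pow_ne_zero m hz0
  have hP : (↑u⁻¹ : A) ^ m - (z ^ (-(m : ℤ))) • (1 : A) = (z ^ m)⁻¹ • ((t : A) * g) := by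
    rw [htg, huT, smul_pow, smul_sub, zpow_neg, zpow_natCast, inv_pow]
  have hE := aux_inv (x := (z ^ m)⁻¹ • ((t : A) * g)) (y := z ^ m • ((↑g⁻¹ : A) * ↑t⁻¹))
    (by
      rw [smul_mul_smul_comm, inv_mul_cancel₀ hzm, one_smul, mul_assoc, Units.mul_inv_cancel_left,
        Units.mul_inv])
    (by
      rw [smul_mul_smul_comm, mul_inv_cancel₀ hzm, one_smul, mul_assoc, Units.inv_mul_cancel_left,
        Units.inv_mul])
  have hR : Ring.inverse ((u : A) - z • (1 : A)) = -((↑t⁻¹ : A) * ↑u⁻¹) := by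
    rw [hut, ← ht]
    exact (aux_inv (by rw [neg_mul_neg, mul_assoc, Units.mul_inv_cancel_left, Units.mul_inv])
      (by rw [neg_mul_neg, mul_assoc, Units.inv_mul_cancel_left, Units.inv_mul])).2
  have hE2 : Ring.inverse ((↑u⁻¹ : A) ^ m - (z ^ (-(m : ℤ))) • (1 : A))
      = z ^ m • ((↑g⁻¹ : A) * ↑t⁻¹) := by rw [hP]; exact hE.2
  refine ⟨h1, by rw [hP]; exact hE.1, ⟨g, hg⟩, ?_, ?_⟩
  · rw [hR, hE2, ← hg, mul_smul_comm, smul_smul, mul_assoc, Units.mul_inv_cancel_left, zpow_neg,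
      zpow_natCast, neg_mul, inv_mul_cancel₀ hzm, neg_smul, one_smul, huT, smul_mul_assoc,
      mul_smul_comm, hTti.eq]
  · rw [hR, hE2, ← hg, Ring.inverse_unit, smul_smul]
    have hc : (m : ℂ) * z ^ (-1 - (m : ℤ)) * z ^ m = z⁻¹ * m := by
      rw [zpow_sub₀ hz0, zpow_neg_one, zpow_natCast]; field_simp
    rw [hc, mul_smul, huT, mul_smul_comm]
    have key : (↑t⁻¹ : A) * T = 1 + (m : ℂ) • ((↑g⁻¹ : A) * ↑t⁻¹) +
        ∑ k ∈ Finset.Ico 1 m, (∑ j ∈ Finset.range k, T ^ j) * (↑g⁻¹ : A) := by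
      have hgi : (↑g⁻¹ : A) * (t * g) = t := by rw [htg, ← hgt, Units.inv_mul_cancel_left]
      rw [← (t * g).mul_left_inj, Units.val_mul, add_mul, add_mul, Finset.sum_mul]
      simp only [mul_assoc, hgi, smul_mul_assoc]
      rw [Units.inv_mul_cancel_left, Units.inv_mul, ← mul_assoc T, hTt.eq, mul_assoc,
        Units.inv_mul_cancel_left, hg, aux_sum T m hm, ht, mul_geom_sum, one_mul]
      simp only [geom_sum_mul]
      rw [← Algebra.algebraMap_eq_smul_one, map_natCast]
    rw [key]
    simp only [smul_add, neg_smul]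
    abel
end

section
/- Let E be a complex Banach space, U ⊆ ℂ an open set, g : U → E holomorphic on U, and φ : ℂ → ℂ a continuously differentiable function with compact support contained in U. Then ∫_U (∂̄φ)(z) · g(z) dA(z) = 0. -/
open MeasureTheory

/-- The Cauchy–Riemann operator `∂̄u := ½(∂_x u + i ∂_y u)`, where `ℂ` is identified with
`ℝ²` and the partial derivatives are real directional derivatives in the directions `1`
and `i`. -/
noncomputable def dbar (f : ℂ → ℂ) (z : ℂ) : ℂ :=
  (1 / 2) * (fderiv ℝ f z 1 + Complex.I * fderiv ℝ f z Complex.I)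

/-- Let `E` be a complex Banach space, `U ⊆ ℂ` open, `g : U → E`
holomorphic, and `φ : ℂ → ℂ` continuously differentiable with compact support contained
in `U`. Then `∫_U (∂̄φ)(z) • g(z) dA(z) = 0`. -/
theorem stmt5 {E : Type*} [NormedAddCommGroup E] [NormedSpace ℂ E] [CompleteSpace E]
    (U : Set ℂ) (hU : IsOpen U) (g : ℂ → E) (hg : DifferentiableOn ℂ g U)
    (φ : ℂ → ℂ) (hφ : ContDiff ℝ 1 φ) (hφc : HasCompactSupport φ)
    (hφU : tsupport φ ⊆ U) :
    ∫ z in U, dbar φ z • g z = 0 := by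
  have hz : ∀ z, z ∉ U → φ =ᶠ[nhds z] 0 := fun z hz =>
    notMem_tsupport_iff_eventuallyEq.mp (fun h => hz (hφU h))
  have hh : ContDiff ℝ 1 (fun z => φ z • g z) := by
    rw [contDiff_iff_contDiffAt]
    intro z
    by_cases hzU : z ∈ U
    · have h1 : ContDiffAt ℂ 1 g z := (hg.contDiffOn hU).contDiffAt (hU.mem_nhds hzU)
      exact hφ.contDiffAt.smul (h1.restrict_scalars ℝ)
    · have h2 : (fun z => φ z • g z) =ᶠ[nhds z] fun _ => (0 : E) := by
        filter_upwards [hz z hzU] with w hw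
        simp [hw]
      exact contDiffAt_const.congr_of_eventuallyEq h2
  have hhc : HasCompactSupport (fun z => φ z • g z) := hφc.smul_right
  have hint : ∀ v : ℂ, Integrable (fun z => fderiv ℝ (fun z => φ z • g z) z v) := fun v =>
    ((hh.continuous_fderiv (by norm_num)).clm_apply continuous_const).integrable_of_hasCompactSupport
      (hhc.fderiv_apply ℝ v)
  have hzero : ∀ v : ℂ, ∫ z, fderiv ℝ (fun z => φ z • g z) z v = 0 := by
    intro v
    have := integral_smul_fderiv_eq_neg_fderiv_smul_of_integrable (μ := (volume : Measure ℂ))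
      (𝕜 := ℝ) (f := fun _ : ℂ => (1 : ℝ)) (g := fun z => φ z • g z) (v := v)
      (by simp) (by simpa using hint v)
      (by simpa using hh.continuous.integrable_of_hasCompactSupport hhc)
      (fun _ _ => differentiableAt_const _) (fun z _ => hh.differentiable (by norm_num) z)
    simpa using this
  have key : ∀ z, dbar φ z • g z = (1 / 2 : ℂ) • (fderiv ℝ (fun z => φ z • g z) z 1 +
      Complex.I • fderiv ℝ (fun z => φ z • g z) z Complex.I) ∧ (z ∉ U → dbar φ z • g z = 0) := by
    intro z
    by_cases hzU : z ∈ U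
    · refine ⟨?_, fun h => absurd hzU h⟩
      have h1 : HasDerivAt g (deriv g z) z :=
        (hg.differentiableAt (hU.mem_nhds hzU)).hasDerivAt
      have h2 := h1.hasFDerivAt.restrictScalars ℝ
      have h3 := ((hφ.differentiable (by norm_num) z).hasFDerivAt.smul h2).fderiv
      change fderiv ℝ (fun z => φ z • g z) z = _ at h3
      rw [h3]
      simp only [dbar, ContinuousLinearMap.add_apply, ContinuousLinearMap.smul_apply,
        ContinuousLinearMap.smulRight_apply, ContinuousLinearMap.coe_restrictScalars',
        ContinuousLinearMap.toSpanSingleton_apply]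
      match_scalars
      · ring
      · linear_combination (-(1/2) * φ z) * Complex.I_mul_I
    · have h2 : (fun z => φ z • g z) =ᶠ[nhds z] fun _ => (0 : E) := by
        filter_upwards [hz z hzU] with w hw
        simp [hw]
      have h4 : dbar φ z = 0 := by
        simp [dbar, (hz z hzU).fderiv_eq]
      simp [h4, h2.fderiv_eq]
  rw [setIntegral_eq_integral_of_forall_compl_eq_zero (fun z h => (key z).2 h)]
  simp_rw [fun z => (key z).1]
  have hI : Integrable (fun z => Complex.I • fderiv ℝ (fun z => φ z • g z) z Complex.I) :=
    (hint Complex.I).smul Complex.I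
  rw [integral_smul, integral_add (hint 1) hI, integral_smul, hzero, hzero]
  simp
end

section
/- Let E be a complex Banach space, let c < d be real numbers and a > 0, and let g be holomorphic on an open set U ⊆ ℂ containing the closed half-strip {x + iy : c ≤ x ≤ d, 0 ≤ y ≤ a}. Let φ : ℂ → ℂ be continuously differentiable with compact support contained in the open rectangle {x + iy : c < x < d, −a < y < a}. Then ∫_{{z ∈ ℂ : Im z > 0}} (∂̄φ)(z) · g(z) dA(z) = (1/(2i)) ∫_c^d φ(x) g(x) dx. -/
open MeasureTheory

theorem dbar_zero_aux (φ : ℂ → ℂ) (z : ℂ) (hz : z ∉ tsupport φ) : dbar φ z = 0 := by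
  have h : fderiv ℝ φ z = 0 := fderiv_of_notMem_tsupport ℝ hz
  simp [dbar, h]

theorem dbar_cont_aux (φ : ℂ → ℂ) (hφ : ContDiff ℝ 1 φ) : Continuous (dbar φ) := by
  have h : Continuous (fderiv ℝ φ) := hφ.continuous_fderiv (by norm_num)
  unfold dbar
  fun_prop

/-- Let `E` be a complex Banach space, `c < d`, `a > 0`, and let `g` be
holomorphic on an open set `U ⊆ ℂ` containing the closed half-strip
`{x+iy : c ≤ x ≤ d, 0 ≤ y ≤ a}`. Let `φ : ℂ → ℂ` be `C¹` with compact support contained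
in the open rectangle `{x+iy : c < x < d, -a < y < a}`. Then
`∫_{Im z > 0} (∂̄φ)(z) • g(z) dA(z) = (1/(2i)) ∫_c^d φ(x) • g(x) dx`. -/
theorem stmt6 {E : Type*} [NormedAddCommGroup E] [NormedSpace ℂ E] [CompleteSpace E]
    (c d a : ℝ) (hcd : c < d) (ha : 0 < a)
    (U : Set ℂ) (hU : IsOpen U)
    (hUstrip : {z : ℂ | c ≤ z.re ∧ z.re ≤ d ∧ 0 ≤ z.im ∧ z.im ≤ a} ⊆ U)
    (g : ℂ → E) (hg : DifferentiableOn ℂ g U)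
    (φ : ℂ → ℂ) (hφ : ContDiff ℝ 1 φ) (hφc : HasCompactSupport φ)
    (hφsupp : tsupport φ ⊆ {z : ℂ | c < z.re ∧ z.re < d ∧ -a < z.im ∧ z.im < a}) :
    ∫ z in {z : ℂ | 0 < z.im}, dbar φ z • g z
      = (1 / (2 * Complex.I)) • ∫ x in c..d, φ (x : ℂ) • g (x : ℂ) := by
  have hsub : ∀ z : ℂ, z ∈ (Set.Icc c d ×ℂ Set.Icc 0 a) → z ∈ U := by
    intro z hz
    rw [Complex.mem_reProdIm] at hz
    exact hUstrip ⟨hz.1.1, hz.1.2, hz.2.1, hz.2.2⟩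
  have hgc : ContinuousOn g (Set.Icc c d ×ℂ Set.Icc 0 a) := hg.continuousOn.mono hsub
  have hRc : IsCompact (Set.Icc c d ×ℂ Set.Icc 0 a) := isCompact_Icc.reProdIm isCompact_Icc
  have hcont : ContinuousOn (fun z => dbar φ z • g z) (Set.Icc c d ×ℂ Set.Icc 0 a) :=
    (dbar_cont_aux φ hφ).continuousOn.smul hgc
  have hφ0 : ∀ z : ℂ, ¬ (c < z.re ∧ z.re < d ∧ -a < z.im ∧ z.im < a) → φ z = 0 :=
    fun z hz => image_eq_zero_of_notMem_tsupport fun h => hz (hφsupp h)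
  have hint := hcont.integrableOn_compact (μ := volume) hRc
  set f' : ℂ → ℂ →L[ℝ] E := fun z =>
    φ z • ((fderiv ℂ g z).restrictScalars ℝ) + (fderiv ℝ φ z).smulRight (g z) with hf'
  have key : ∀ z, Complex.I • f' z 1 - f' z Complex.I
      = (2 * Complex.I) • (dbar φ z • g z) := by
    intro z
    have h1 : fderiv ℂ g z Complex.I = Complex.I • fderiv ℂ g z 1 := by
      rw [← map_smul]; simp
    simp only [hf', dbar, add_apply, smul_apply,
      ContinuousLinearMap.coe_restrictScalars', ContinuousLinearMap.smulRight_apply, h1]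
    have hI : Complex.I * Complex.I = -1 := Complex.I_mul_I
    have e : (2 * Complex.I) * (1 / 2 * (fderiv ℝ φ z 1 + Complex.I * fderiv ℝ φ z Complex.I))
      = Complex.I * fderiv ℝ φ z 1 - fderiv ℝ φ z Complex.I := by
      linear_combination (fderiv ℝ φ z Complex.I) * hI
    rw [smul_smul (2 * Complex.I), e]
    module
  have main := Complex.integral_boundary_rect_of_hasFDerivAt_real_off_countable
    (fun z => φ z • g z) f' (⟨c, 0⟩ : ℂ) (⟨d, a⟩ : ℂ) ∅ Set.countable_empty
    (by
      simp only [Set.uIcc_of_le hcd.le, Set.uIcc_of_le ha.le]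
      exact hφ.continuous.continuousOn.smul hgc)
    (by
      intro z hz
      simp only [min_eq_left hcd.le, max_eq_right hcd.le, min_eq_left ha.le,
        max_eq_right ha.le, Set.sdiff_empty, Complex.mem_reProdIm] at hz
      have hzU : z ∈ U := hUstrip ⟨hz.1.1.le, hz.1.2.le, hz.2.1.le, hz.2.2.le⟩
      have h1 : HasFDerivAt g ((fderiv ℂ g z).restrictScalars ℝ) z :=
        ((hg.differentiableAt (hU.mem_nhds hzU)).hasFDerivAt).restrictScalars ℝ
      have h2 : HasFDerivAt φ (fderiv ℝ φ z) z :=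
        (hφ.differentiable (by norm_num) z).hasFDerivAt
      exact h2.smul h1)
    (by
      simp only [Set.uIcc_of_le hcd.le, Set.uIcc_of_le ha.le, key]
      exact hint.smul (2 * Complex.I))
  simp only [key] at main
  have z1 : ∀ x : ℝ, φ ((x : ℂ) + (a : ℂ) * Complex.I) = 0 := fun x => hφ0 _ (by simp)
  have z2 : ∀ y : ℝ, φ ((d : ℂ) + (y : ℂ) * Complex.I) = 0 := fun x => hφ0 _ (by simp)
  have z3 : ∀ y : ℝ, φ ((c : ℂ) + (y : ℂ) * Complex.I) = 0 := fun x => hφ0 _ (by simp)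
  simp only [z1, z2, z3, zero_smul, intervalIntegral.integral_zero, smul_zero, sub_zero,
    add_zero, Complex.ofReal_zero, zero_mul] at main
  have hA : ∫ z in {z : ℂ | 0 < z.im}, dbar φ z • g z
      = ∫ z in (Set.Ioc c d ×ℂ Set.Ioc 0 a), dbar φ z • g z := by
    apply setIntegral_eq_of_subset_of_forall_sdiff_eq_zero
    · exact measurableSet_lt measurable_const Complex.measurable_im
    · intro z hz
      exact (Complex.mem_reProdIm.1 hz).2.1
    · rintro z ⟨hz, hz2⟩
      rw [dbar_zero_aux φ z, zero_smul]
      intro h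
      have h3 := hφsupp h
      exact hz2 (Complex.mem_reProdIm.2 ⟨⟨h3.1, h3.2.1.le⟩, hz, h3.2.2.2.le⟩)
  have hpre : Complex.measurableEquivRealProd.symm ⁻¹' (Set.Ioc c d ×ℂ Set.Ioc 0 a)
      = Set.Ioc c d ×ˢ Set.Ioc 0 a := rfl
  have hint2 : IntegrableOn (fun z => dbar φ z • g z) (Set.Ioc c d ×ℂ Set.Ioc 0 a) :=
    hint.mono_set fun z hz =>
      ⟨Set.Ioc_subset_Icc_self hz.1, Set.Ioc_subset_Icc_self hz.2⟩
  have hB : ∫ z in (Set.Ioc c d ×ℂ Set.Ioc 0 a), dbar φ z • g z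
      = ∫ x in c..d, ∫ y in (0:ℝ)..a, dbar φ (x + y * Complex.I) • g (x + y * Complex.I) := by
    rw [← Complex.volume_preserving_equiv_real_prod.symm.setIntegral_preimage_emb
      Complex.measurableEquivRealProd.symm.measurableEmbedding, hpre]
    rw [← Complex.volume_preserving_equiv_real_prod.symm.integrableOn_comp_preimage
      Complex.measurableEquivRealProd.symm.measurableEmbedding, hpre] at hint2
    rw [Measure.volume_eq_prod] at hint2 ⊢
    refine (setIntegral_prod _ hint2).trans ?_
    simp only [Function.comp_apply, intervalIntegral.integral_of_le hcd.le, intervalIntegral.integral_of_le ha.le,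
      Complex.measurableEquivRealProd_symm_apply, Complex.mk_eq_add_mul_I]
  rw [hA, hB, main]
  simp only [intervalIntegral.integral_smul]
  rw [smul_smul, one_div, inv_mul_cancel₀ (by simp), one_smul]
end

section
/- Let N ∈ ℕ, let f : ℝ → ℂ be of class C^{N+1}, let χ : ℝ² → ℂ be differentiable, and define the almost-analytic extension f̃(x + iy) := (∑_{k=0}^{N} f^{(k)}(x) (iy)^k / k!) · χ(x, y). Then at every point z = x + iy ∈ ℂ one has ∂̄f̃(z) = ½ · f^{(N+1)}(x) · (iy)^N / N! · χ(x, y) + (∑_{k=0}^{N} f^{(k)}(x) (iy)^k / k!) · (∂̄χ)(x, y). -/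
lemma term_hasFDerivAt (k : ℕ) (f : ℝ → ℂ) (hf : ContDiff ℝ (k + 1 : ℕ) f) (z : ℂ) :
    ∃ L : ℂ →L[ℝ] ℂ, HasFDerivAt (fun w : ℂ =>
      iteratedDeriv k f w.re * (Complex.I * w.im) ^ k / (k.factorial : ℂ)) L z ∧
      L 1 = iteratedDeriv (k + 1) f z.re * (Complex.I * z.im) ^ k / (k.factorial : ℂ) ∧
      L Complex.I = iteratedDeriv k f z.re * (k * (Complex.I * z.im) ^ (k - 1) * Complex.I)
        / (k.factorial : ℂ) := by
  have h1 : HasDerivAt (iteratedDeriv k f) (iteratedDeriv (k + 1) f z.re) z.re := by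
    rw [iteratedDeriv_succ]
    exact (hf.differentiable_iteratedDeriv k (by exact_mod_cast Nat.lt_succ_self k) _).hasDerivAt
  have h2 : HasFDerivAt (fun w : ℂ => iteratedDeriv k f w.re) _ z :=
    HasFDerivAt.comp z (f := fun w : ℂ => w.re) h1.hasFDerivAt Complex.reCLM.hasFDerivAt
  have h3 : HasFDerivAt (fun w : ℂ => Complex.I * (w.im : ℂ))
      (Complex.I • (Complex.ofRealCLM.comp Complex.imCLM)) z :=
    (Complex.ofRealCLM.comp Complex.imCLM).hasFDerivAt.const_mul Complex.I
  have h4 := (h2.mul (h3.pow k)).mul_const ((k.factorial : ℂ)⁻¹)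
  refine ⟨_, by simp only [div_eq_mul_inv]; exact h4, ?_, ?_⟩
  · simp
    ring
  · simp
    ring

lemma sum_hasFDerivAt (N : ℕ) (f : ℝ → ℂ) (hf : ContDiff ℝ (N + 1 : ℕ) f) (z : ℂ) :
    ∃ L : ℂ →L[ℝ] ℂ, HasFDerivAt (fun w : ℂ => ∑ k ∈ Finset.range (N + 1),
      iteratedDeriv k f w.re * (Complex.I * w.im) ^ k / (k.factorial : ℂ)) L z ∧
      L 1 + Complex.I * L Complex.I =
        iteratedDeriv (N + 1) f z.re * (Complex.I * z.im) ^ N / (N.factorial : ℂ) := by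
  induction N with
  | zero =>
    obtain ⟨L, hL, h1, hI⟩ := term_hasFDerivAt 0 f hf z
    refine ⟨L, by simpa using hL, ?_⟩
    rw [h1, hI]
    simp
  | succ n ih =>
    obtain ⟨L, hL, h⟩ := ih (hf.of_le (by exact_mod_cast Nat.le_succ _))
    obtain ⟨M, hM, h1, hI⟩ := term_hasFDerivAt (n + 1) f hf z
    refine ⟨L + M, ?_, ?_⟩
    · simp only [Finset.sum_range_succ _ (n + 1)]
      exact hL.add hM
    · have e : (L + M) 1 + Complex.I * (L + M) Complex.I
          = (L 1 + Complex.I * L Complex.I) + (M 1 + Complex.I * M Complex.I) := by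
        simp only [add_apply]
        ring
      rw [e, h, h1, hI, Nat.factorial_succ]
      have a : (n.factorial : ℂ) ≠ 0 := by exact_mod_cast n.factorial_ne_zero
      have b : ((n : ℂ) + 1) ≠ 0 := by exact_mod_cast n.succ_ne_zero
      push_cast
      rw [pow_succ]
      generalize (Complex.I * (z.im : ℂ)) ^ n = P
      generalize Complex.I * (z.im : ℂ) = Q
      field_simp
      rw [Complex.I_sq]
      ring

/-- Let `N ∈ ℕ`, `f : ℝ → ℂ` of class `C^{N+1}`, `χ : ℝ² ≅ ℂ → ℂ`
(real-)differentiable, and let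
`f̃(x+iy) := (∑_{k=0}^{N} f^{(k)}(x)(iy)^k/k!) · χ(x,y)` be the almost-analytic extension.
Then at every `z = x + iy`,
`∂̄f̃(z) = ½ f^{(N+1)}(x)(iy)^N/N! · χ(x,y) + (∑_{k=0}^{N} f^{(k)}(x)(iy)^k/k!) ∂̄χ(x,y)`. -/
theorem stmt7 (N : ℕ) (f : ℝ → ℂ) (hf : ContDiff ℝ (N + 1 : ℕ) f)
    (χ : ℂ → ℂ) (hχ : Differentiable ℝ χ) (z : ℂ) :
    dbar (fun w : ℂ =>
        (∑ k ∈ Finset.range (N + 1),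
          iteratedDeriv k f w.re * (Complex.I * w.im) ^ k / (k.factorial : ℂ)) * χ w) z
      = (1 / 2) * (iteratedDeriv (N + 1) f z.re * (Complex.I * z.im) ^ N / (N.factorial : ℂ))
            * χ z
        + (∑ k ∈ Finset.range (N + 1),
            iteratedDeriv k f z.re * (Complex.I * z.im) ^ k / (k.factorial : ℂ)) * dbar χ z := by
  obtain ⟨L, hL, h⟩ := sum_hasFDerivAt N f hf z
  have hm := hL.mul (hχ z).hasFDerivAt
  unfold dbar
  have hm2 : fderiv ℝ (fun w : ℂ => (∑ k ∈ Finset.range (N + 1),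
      iteratedDeriv k f w.re * (Complex.I * w.im) ^ k / (k.factorial : ℂ)) * χ w) z = _ :=
    HasFDerivAt.fderiv hm
  rw [hm2, ← h]
  simp only [add_apply, smul_apply, smul_eq_mul]
  ring
end

section
/- Let γ ∈ ℂ and let z ∈ ℂ with z ≠ 0 and z ≠ γ be such that H0 − z is boundedly invertible. Then H_γ − z = H0 + γΠ0 − z is boundedly invertible, and its inverse is given by (H_γ − z)^{-1} = (H0 − z)^{-1} + (1/z + 1/(γ − z)) Π0. -/
theorem stmt8_aux {R : Type*} [Ring R] [Algebra ℂ R] (H P : R) (hHP : H * P = 0)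
    (hPH : P * H = 0) (hPP : P * P = P) (γ z : ℂ) (hz0 : z ≠ 0) (hzγ : z ≠ γ)
    (hz : IsUnit (H - z • (1 : R))) :
    IsUnit (H + γ • P - z • (1 : R)) ∧
    Ring.inverse (H + γ • P - z • (1 : R))
      = Ring.inverse (H - z • (1 : R)) + (1 / z + 1 / (γ - z)) • P := by
  have hg : γ - z ≠ 0 := sub_ne_zero.mpr (Ne.symm hzγ)
  set A := H - z • (1 : R) with hA
  have hAR := Ring.mul_inverse_cancel A hz
  have hRA := Ring.inverse_mul_cancel A hz
  set B := Ring.inverse A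
  have hAP : A * P = (-z) • P := by simp [hA, sub_mul, hHP]
  have hPA : P * A = (-z) • P := by simp [hA, mul_sub, hPH]
  have hBP : B * P = (-(1 / z)) • P := by
    have h : P = (-(1 / z)) • (A * P) := by
      rw [hAP, smul_smul]; field_simp; simp
    calc B * P = B * ((-(1 / z)) • (A * P)) := by rw [← h]
      _ = (-(1 / z)) • ((B * A) * P) := by rw [mul_smul_comm, mul_assoc]
      _ = _ := by rw [hRA, one_mul]
  have hPB : P * B = (-(1 / z)) • P := by
    have h : P = (-(1 / z)) • (P * A) := by
      rw [hPA, smul_smul]; field_simp; simp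
    calc P * B = ((-(1 / z)) • (P * A)) * B := by rw [← h]
      _ = (-(1 / z)) • (P * (A * B)) := by rw [smul_mul_assoc, mul_assoc]
      _ = _ := by rw [hAR, mul_one]
  have e : H + γ • P - z • (1 : R) = A + γ • P := by rw [hA]; abel
  have hc : (1 / z + 1 / (γ - z)) * (-z) + γ * (-(1 / z)) + γ * (1 / z + 1 / (γ - z)) = 0 := by
    field_simp
    ring
  rw [e]
  set c := 1 / z + 1 / (γ - z)
  have h1 : (A + γ • P) * (B + c • P) = 1 := by
    calc _ = 1 + (c * (-z) + γ * (-(1 / z)) + γ * c) • P := by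
          simp only [add_mul, mul_add, smul_mul_assoc, mul_smul_comm, hAR, hAP, hPB, hPP]
          module
      _ = 1 := by rw [hc]; simp
  have h2 : (B + c • P) * (A + γ • P) = 1 := by
    calc _ = 1 + (c * (-z) + γ * (-(1 / z)) + γ * c) • P := by
          simp only [add_mul, mul_add, smul_mul_assoc, mul_smul_comm, hRA, hBP, hPA, hPP]
          module
      _ = 1 := by rw [hc]; simp
  let u : Rˣ := ⟨A + γ • P, B + c • P, h1, h2⟩
  exact ⟨u.isUnit, Ring.inverse_unit u⟩


/-- Let `𝓗` be a complex Hilbert space, `H0` a bounded self-adjoint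
operator, `u0` a unit vector with `H0 u0 = 0`, `Π0 v := ⟨v, u0⟩ u0` the rank-one
orthogonal projection onto `u0`, and `H_γ := H0 + γ Π0`. If `z ≠ 0`, `z ≠ γ` and
`H0 - z` is boundedly invertible, then `H_γ - z` is boundedly invertible and
`(H_γ - z)⁻¹ = (H0 - z)⁻¹ + (1/z + 1/(γ - z)) Π0`. -/
theorem stmt8 {𝓗 : Type*} [NormedAddCommGroup 𝓗] [InnerProductSpace ℂ 𝓗] [CompleteSpace 𝓗]
    (H0 : 𝓗 →L[ℂ] 𝓗) (hsa : IsSelfAdjoint H0) (u0 : 𝓗) (hu0 : ‖u0‖ = 1)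
    (hker : H0 u0 = 0) (γ z : ℂ) (hz0 : z ≠ 0) (hzγ : z ≠ γ)
    (hz : IsUnit (H0 - z • (1 : 𝓗 →L[ℂ] 𝓗))) :
    IsUnit (H0 + γ • ((innerSL ℂ u0).smulRight u0) - z • (1 : 𝓗 →L[ℂ] 𝓗)) ∧
    Ring.inverse (H0 + γ • ((innerSL ℂ u0).smulRight u0) - z • (1 : 𝓗 →L[ℂ] 𝓗))
      = Ring.inverse (H0 - z • (1 : 𝓗 →L[ℂ] 𝓗))
        + (1 / z + 1 / (γ - z)) • ((innerSL ℂ u0).smulRight u0) := by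
  apply stmt8_aux H0 _ _ _ _ γ z hz0 hzγ hz
  · ext v
    simp [hker]
  · ext v
    have h : inner ℂ u0 (H0 v) = 0 := by
      rw [← ContinuousLinearMap.adjoint_inner_left, hsa.adjoint_eq, hker, inner_zero_left]
    simp [h]
  · ext v
    simp [hu0, inner_smul_right]
end

section
/- Let β > 0. There exists z ∈ ℂ with Im z ≠ 0 such that D(z) = 0, i.e. 1 + iβ ∫_0^1 (t − z)^{-1} dt = 0, if and only if β > 1/π. Moreover, when β > 1/π there is exactly one such point, namely z_β = ½ + (i/2) · cos(1/(2β))/sin(1/(2β)), and it satisfies Im z_β > 0. -/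
/-- The toy-model perturbation determinant `D(z) := 1 + iβ ∫_0^1 (t - z)⁻¹ dt`. -/
noncomputable def Dtoy (β : ℝ) (z : ℂ) : ℂ :=
  1 + Complex.I * (β : ℂ) * ∫ t in (0 : ℝ)..1, ((t : ℂ) - z)⁻¹

lemma toy_int (z : ℂ) (hz : z.im ≠ 0) :
    ∫ t in (0 : ℝ)..1, ((t : ℂ) - z)⁻¹ = Complex.log (1 - z) - Complex.log (-z) := by
  have hne : ∀ t : ℝ, (t : ℂ) - z ≠ 0 := by
    intro t h
    apply hz
    have := congrArg Complex.im h
    simpa using this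
  have hd : ∀ t ∈ Set.uIcc (0 : ℝ) 1,
      HasDerivAt (fun t : ℝ => Complex.log ((t : ℂ) - z)) (((t : ℂ) - z)⁻¹) t := by
    intro t _
    have h1 : HasDerivAt (fun t : ℝ => (t : ℂ) - z) 1 t :=
      (Complex.ofRealCLM.hasDerivAt (x := t)).sub_const z
    have h2 := h1.clog_real (Or.inr (by simpa using hz))
    simpa using h2
  rw [intervalIntegral.integral_eq_sub_of_hasDerivAt hd]
  · simp
  · apply Continuous.intervalIntegrable
    exact Continuous.inv₀ (by fun_prop) hne

lemma toy_im (z : ℂ) (hz : z.im ≠ 0) :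
    -Real.pi < (Complex.log (1 - z) - Complex.log (-z)).im ∧
    (Complex.log (1 - z) - Complex.log (-z)).im < Real.pi := by
  simp only [Complex.sub_im, Complex.log_im]
  have a1 := Complex.neg_pi_lt_arg (1 - z)
  have a2 := Complex.arg_le_pi (1 - z)
  have b1 := Complex.neg_pi_lt_arg (-z)
  have b2 := Complex.arg_le_pi (-z)
  rcases lt_or_gt_of_ne hz with h | h
  · have h1 : 0 ≤ (1 - z).arg := Complex.arg_nonneg_iff.2 (by simp; linarith)
    have h2 : 0 ≤ (-z).arg := Complex.arg_nonneg_iff.2 (by simp; linarith)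
    have h3 : (1 - z).arg ≠ Real.pi := by
      intro h; have := (Complex.arg_eq_pi_iff.1 h).2; simp at this; exact hz this
    have h4 : (-z).arg ≠ Real.pi := by
      intro h; have := (Complex.arg_eq_pi_iff.1 h).2; simp at this; exact hz this
    have := lt_of_le_of_ne a2 h3
    have := lt_of_le_of_ne b2 h4
    constructor <;> linarith
  · have h1 : (1 - z).arg < 0 := Complex.arg_neg_iff.2 (by simp; linarith)
    have h2 : (-z).arg < 0 := Complex.arg_neg_iff.2 (by simp; linarith)
    constructor <;> linarith

lemma toy_exp (z : ℂ) (hz : z.im ≠ 0) :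
    Complex.exp (Complex.log (1 - z) - Complex.log (-z)) * (-z) = 1 - z := by
  have h0 : -z ≠ 0 := by intro h; apply hz; have := congrArg Complex.im h; simpa using this
  have h1 : 1 - z ≠ 0 := by intro h; apply hz; have := congrArg Complex.im h; simpa using this
  rw [Complex.exp_sub, Complex.exp_log h0, Complex.exp_log h1, div_mul_cancel₀ _ h0]

lemma toy_D (β : ℝ) (hβ : 0 < β) (z : ℂ) (hz : z.im ≠ 0) :
    Dtoy β z = 0 ↔ Complex.log (1 - z) - Complex.log (-z) = ((1 / β : ℝ) : ℂ) * Complex.I := by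
  unfold Dtoy
  rw [toy_int z hz]
  generalize Complex.log (1 - z) - Complex.log (-z) = L
  have hb : (β : ℂ) ≠ 0 := by exact_mod_cast hβ.ne'
  push_cast
  constructor
  · intro h
    field_simp
    linear_combination (-Complex.I) * h + β * L * Complex.I_sq
  · rintro rfl
    field_simp
    linear_combination Complex.I_sq

lemma toy_z (β : ℝ) (hs : Real.sin (1 / (2 * β)) ≠ 0) :
    (1 / 2 + (Complex.I / 2) *
      ((Real.cos (1 / (2 * β)) / Real.sin (1 / (2 * β)) : ℝ) : ℂ)) *
      (1 - Complex.exp (((1 / β : ℝ) : ℂ) * Complex.I)) = 1 := by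
  have e : ((1 / β : ℝ) : ℂ) * Complex.I =
      ((1 / (2 * β) : ℝ) : ℂ) * Complex.I + ((1 / (2 * β) : ℝ) : ℂ) * Complex.I := by
    rw [← add_mul, ← Complex.ofReal_add]
    congr 2
    rw [← add_div, one_add_one_eq_two, mul_comm, ← div_div, ← div_right_comm]
    by_cases h : β = 0 <;> field_simp [h]
  rw [e, Complex.exp_add, Complex.exp_mul_I, ← Complex.ofReal_cos, ← Complex.ofReal_sin]
  have hcs := Real.sin_sq_add_cos_sq (1 / (2 * β))
  generalize Real.sin (1 / (2 * β)) = s at *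
  generalize Real.cos (1 / (2 * β)) = c at *
  have hs' : (s : ℂ) ≠ 0 := by exact_mod_cast hs
  have hcs' : (s : ℂ) ^ 2 + (c : ℂ) ^ 2 = 1 := by exact_mod_cast hcs
  push_cast
  field_simp
  ring_nf
  have i2 := Complex.I_sq
  have i3 : Complex.I ^ 3 = -Complex.I := by rw [pow_succ, i2]; ring
  simp only [i2, i3]
  grind

lemma toy_key (β : ℝ) (hβ : 0 < β) (hp : 1 / β < Real.pi) :
    0 < Real.cos (1 / (2 * β)) / Real.sin (1 / (2 * β)) := by
  have h2 : 1 / (2 * β) = (1 / β) / 2 := by field_simp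
  have h0 : 0 < 1 / β := by positivity
  rw [h2]
  exact div_pos (Real.cos_pos_of_mem_Ioo ⟨by linarith, by linarith⟩)
    (Real.sin_pos_of_pos_of_lt_pi (by linarith) (by linarith))

lemma toy_lt (β : ℝ) (hβ : 0 < β) : 1 / Real.pi < β ↔ 1 / β < Real.pi :=
  one_div_lt Real.pi_pos hβ

lemma toy_zim (x : ℝ) : (1 / 2 + (Complex.I / 2) * (x : ℂ)).im = x / 2 := by
  have : (1 / 2 + (Complex.I / 2) * (x : ℂ)) = ((1/2 : ℝ) : ℂ) + ((x / 2 : ℝ) : ℂ) * Complex.I := by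
    push_cast; ring
  rw [this]
  simp

lemma toy_pi (β : ℝ) (hβ : 0 < β) (z : ℂ) (hz : z.im ≠ 0) (h : Dtoy β z = 0) :
    1 / β < Real.pi := by
  have := (toy_im z hz).2
  rw [(toy_D β hβ z hz).1 h, Complex.im_ofReal_mul] at this
  simpa using this

/-- Let `β > 0`. There is `z ∈ ℂ` with `Im z ≠ 0` and `D(z) = 0` iff
`β > 1/π`; moreover, when `β > 1/π` there is exactly one such point, namely
`z_β = ½ + (i/2) · cos(1/(2β))/sin(1/(2β))`, and it satisfies `Im z_β > 0`. -/
theorem stmt11 (β : ℝ) (hβ : 0 < β) :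
    ((∃ z : ℂ, z.im ≠ 0 ∧ Dtoy β z = 0) ↔ 1 / Real.pi < β) ∧
    (1 / Real.pi < β →
      (∀ z : ℂ, (z.im ≠ 0 ∧ Dtoy β z = 0) ↔
        z = 1 / 2 + (Complex.I / 2) *
          ((Real.cos (1 / (2 * β)) / Real.sin (1 / (2 * β)) : ℝ) : ℂ)) ∧
      0 < (1 / 2 + (Complex.I / 2) *
          ((Real.cos (1 / (2 * β)) / Real.sin (1 / (2 * β)) : ℝ) : ℂ)).im) := by
  have main : 1 / Real.pi < β → ∀ z : ℂ, (z.im ≠ 0 ∧ Dtoy β z = 0) ↔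
        z = 1 / 2 + (Complex.I / 2) *
          ((Real.cos (1 / (2 * β)) / Real.sin (1 / (2 * β)) : ℝ) : ℂ) := by
    intro h z
    have hp := (toy_lt β hβ).1 h
    have hk := toy_key β hβ hp
    have hs : Real.sin (1 / (2 * β)) ≠ 0 := by
      intro h; rw [h, div_zero] at hk; exact lt_irrefl _ hk
    have hZ := toy_z β hs
    constructor
    · rintro ⟨hz, hD⟩
      have he := toy_exp z hz
      rw [(toy_D β hβ z hz).1 hD] at he
      have h1 : z * (1 - Complex.exp (((1 / β : ℝ) : ℂ) * Complex.I)) = 1 := by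
        linear_combination he
      have hne : (1 - Complex.exp (((1 / β : ℝ) : ℂ) * Complex.I)) ≠ 0 := by
        intro h; rw [h, mul_zero] at h1; exact zero_ne_one h1
      exact mul_right_cancel₀ hne (h1.trans hZ.symm)
    · intro hzz
      have hz : z.im ≠ 0 := by
        rw [hzz, toy_zim]; exact (half_pos hk).ne'
      refine ⟨hz, (toy_D β hβ z hz).2 ?_⟩
      rw [← hzz] at hZ
      have he := toy_exp z hz
      have hz0 : -z ≠ 0 := by
        intro h; apply hz; have := congrArg Complex.im h; simpa using this
      have hb : 0 < 1 / β := by positivity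
      have him : (((1 / β : ℝ) : ℂ) * Complex.I).im = 1 / β := by
        rw [Complex.im_ofReal_mul]; simp
      apply Complex.exp_inj_of_neg_pi_lt_of_le_pi (toy_im z hz).1 (toy_im z hz).2.le
      · rw [him]; linarith [Real.pi_pos]
      · rw [him]; exact hp.le
      · apply mul_right_cancel₀ hz0
        linear_combination he - hZ
  refine ⟨⟨?_, fun h => ⟨_, (main h _).2 rfl⟩⟩, fun h => ⟨main h, ?_⟩⟩
  · rintro ⟨z, hz, hD⟩
    exact (toy_lt β hβ).2 (toy_pi β hβ z hz hD)
  · rw [toy_zim]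
    exact half_pos (toy_key β hβ ((toy_lt β hβ).1 h))
end

section
/- Let V : ℝ³ → ℂ be measurable and short-range with exponent δ > 3. Then the map w ↦ K_w is continuous from the closed upper half-plane {w ∈ ℂ : Im w ≥ 0} into L²(ℝ³ × ℝ³); in particular, for every λ > 0 and every sequence ε_n → 0⁺, the kernels K_{w_n} with w_n → ±√λ, Im w_n ≥ 0, converge in L²(ℝ³ × ℝ³) to K_{±√λ}. -/
open MeasureTheory Filter Topology

/-- Three-dimensional Euclidean space `ℝ³`. -/
abbrev E3 : Type := EuclideanSpace ℝ (Fin 3)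

/-- The Japanese bracket `⟨x⟩ := (1 + |x|²)^{1/2}`. -/
noncomputable def jap (x : E3) : ℝ := Real.sqrt (1 + ‖x‖ ^ 2)

/-- The weighted free-resolvent kernel
`K_w(x,y) := (4π)⁻¹ ⟨x⟩^{-δ/2} e^{iw|x-y|} |x-y|⁻¹ ⟨y⟩^{δ/2} V(y)`. -/
noncomputable def Kker (δ : ℝ) (V : E3 → ℂ) (w : ℂ) (p : E3 × E3) : ℂ :=
  (((4 * Real.pi)⁻¹ : ℝ) : ℂ) * ((jap p.1 ^ (-δ / 2) : ℝ) : ℂ)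
    * Complex.exp (Complex.I * w * (‖p.1 - p.2‖ : ℂ)) * ((‖p.1 - p.2‖⁻¹ : ℝ) : ℂ)
    * ((jap p.2 ^ (δ / 2) : ℝ) : ℂ) * V p.2

theorem jap_pos (x : E3) : 0 < jap x := by
  unfold jap; positivity

theorem one_le_jap (x : E3) : 1 ≤ jap x := by
  unfold jap
  rw [Real.one_le_sqrt]
  nlinarith [sq_nonneg ‖x‖]

theorem continuous_jap : Continuous jap := by
  unfold jap; fun_prop

theorem jap_integrable (δ : ℝ) (hδ : 3 < δ) :
    Integrable (fun x : E3 => jap x ^ (-δ)) := by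
  have h := integrable_rpow_neg_one_add_norm_sq (E := E3) (μ := volume) (r := δ) (by simpa using hδ)
  refine h.congr (Eventually.of_forall fun x => ?_)
  simp only [jap]
  rw [Real.sqrt_eq_rpow, ← Real.rpow_mul (by positivity)]
  congr 1
  ring

/-- The truncated singular weight. -/
noncomputable def hsing : E3 → ℝ :=
  (Metric.ball (0 : E3) 1).indicator (fun z => ‖z‖⁻¹ ^ 2)

theorem hsing_integrable : Integrable hsing := by
  unfold hsing
  rw [integrable_indicator_iff measurableSet_ball]
  have h : LocallyIntegrable (fun z : E3 => ‖z‖⁻¹ ^ 2) := by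
    refine locallyIntegrable_of_norm_le_rpow (C := 1) (α := 2) (by simp) (by simp; norm_num)
      (Eventually.of_forall fun x => ?_)
      (Measurable.aestronglyMeasurable (by fun_prop))
    rw [Real.norm_of_nonneg (by positivity), Real.rpow_neg (norm_nonneg _), one_mul, inv_pow]
    norm_cast
  exact (h.integrableOn_isCompact (isCompact_closedBall (0 : E3) 1)).mono_set
    Metric.ball_subset_closedBall

/-- The dominating function. -/
noncomputable def domi (δ : ℝ) (p : E3 × E3) : ℝ :=
  jap p.1 ^ (-δ) * jap p.2 ^ (-δ) + jap p.2 ^ (-δ) * hsing (p.1 - p.2)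

theorem domi_integrable (δ : ℝ) (hδ : 3 < δ) :
    Integrable (domi δ) (volume : Measure (E3 × E3)) := by
  have ha := jap_integrable δ hδ
  have h1 := ha.mul_prod ha
  have h2 := ha.convolution_integrand (ContinuousLinearMap.mul ℝ ℝ) hsing_integrable
  exact h1.add h2

theorem le_domi (δ : ℝ) (hδ : 3 < δ) (p : E3 × E3) :
    jap p.1 ^ (-δ) * jap p.2 ^ (-δ) * ‖p.1 - p.2‖⁻¹ ^ 2 ≤ domi δ p := by
  unfold domi
  have ha : 0 < jap p.1 ^ (-δ) := Real.rpow_pos_of_pos (jap_pos _) _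
  have hb : 0 < jap p.2 ^ (-δ) := Real.rpow_pos_of_pos (jap_pos _) _
  have ha1 : jap p.1 ^ (-δ) ≤ 1 :=
    Real.rpow_le_one_of_one_le_of_nonpos (one_le_jap _) (by linarith)
  by_cases h : p.1 - p.2 ∈ Metric.ball (0 : E3) 1
  · rw [hsing, Set.indicator_of_mem h]
    have h3 : 0 ≤ ‖p.1 - p.2‖⁻¹ ^ 2 := by positivity
    have h4 : jap p.1 ^ (-δ) * (jap p.2 ^ (-δ) * ‖p.1 - p.2‖⁻¹ ^ 2)
        ≤ 1 * (jap p.2 ^ (-δ) * ‖p.1 - p.2‖⁻¹ ^ 2) := by gcongr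
    nlinarith [mul_pos ha hb]
  · rw [hsing, Set.indicator_of_notMem h]
    have h1 : 1 ≤ ‖p.1 - p.2‖ := by simpa using h
    have h2 : ‖p.1 - p.2‖⁻¹ ^ 2 ≤ 1 := pow_le_one₀ (by positivity) (inv_le_one_of_one_le₀ h1)
    have h3 := mul_le_mul_of_nonneg_left h2 (mul_pos ha hb).le
    linarith

theorem Kker_norm_le (δ : ℝ) (V : E3 → ℂ) (M : ℝ) (hM : 0 < M)
    (hbound : ∀ x : E3, ‖V x‖ ≤ M * jap x ^ (-δ)) (w : ℂ) (hw : 0 ≤ w.im) (p : E3 × E3) :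
    ‖Kker δ V w p‖ ≤ M * (jap p.1 ^ (-δ / 2) * jap p.2 ^ (-δ / 2) * ‖p.1 - p.2‖⁻¹) := by
  have ha : 0 < jap p.1 ^ (-δ / 2) := Real.rpow_pos_of_pos (jap_pos _) _
  have hb : 0 < jap p.2 ^ (δ / 2) := Real.rpow_pos_of_pos (jap_pos _) _
  have hexp : ‖Complex.exp (Complex.I * w * (‖p.1 - p.2‖ : ℂ))‖ ≤ 1 := by
    rw [Complex.norm_exp, Real.exp_le_one_iff]
    simp
    positivity
  have hpi : (4 * Real.pi)⁻¹ ≤ 1 := inv_le_one_of_one_le₀ (by linarith [Real.pi_gt_three])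
  have hpi0 : 0 < (4 * Real.pi)⁻¹ := by positivity
  have hV : jap p.2 ^ (δ / 2) * ‖V p.2‖ ≤ M * jap p.2 ^ (-δ / 2) := by
    calc jap p.2 ^ (δ / 2) * ‖V p.2‖ ≤ jap p.2 ^ (δ / 2) * (M * jap p.2 ^ (-δ)) := by
          gcongr; exact hbound _
      _ = M * (jap p.2 ^ (δ / 2) * jap p.2 ^ (-δ)) := by ring
      _ = M * jap p.2 ^ (-δ / 2) := by
          rw [← Real.rpow_add (jap_pos _)]; congr 2; ring
  unfold Kker
  simp only [norm_mul, Complex.norm_real, Real.norm_of_nonneg ha.le, Real.norm_of_nonneg hb.le,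
    Real.norm_of_nonneg hpi0.le, norm_inv, norm_norm]
  calc _ = (4 * Real.pi)⁻¹ * jap p.1 ^ (-δ / 2)
        * ‖Complex.exp (Complex.I * w * (‖p.1 - p.2‖ : ℂ))‖ * ‖p.1 - p.2‖⁻¹
        * (jap p.2 ^ (δ / 2) * ‖V p.2‖) := by
          first | ring | (simp only [Real.norm_of_nonneg hpi0.le, norm_mul, norm_inv]; ring)
    _ ≤ 1 * jap p.1 ^ (-δ / 2) * 1 * ‖p.1 - p.2‖⁻¹ * (M * jap p.2 ^ (-δ / 2)) := by gcongr
    _ = _ := by ring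

theorem Kker_measurable (δ : ℝ) (V : E3 → ℂ) (hV : Measurable V) (w : ℂ) :
    Measurable (Kker δ V w) := by
  have := continuous_jap.measurable
  unfold Kker
  fun_prop

theorem diff_bound (δ : ℝ) (hδ : 3 < δ) (V : E3 → ℂ) (M : ℝ) (hM : 0 < M)
    (hbound : ∀ x : E3, ‖V x‖ ≤ M * jap x ^ (-δ)) (w w₀ : ℂ) (hw : 0 ≤ w.im) (hw₀ : 0 ≤ w₀.im)
    (p : E3 × E3) :
    ‖Kker δ V w p - Kker δ V w₀ p‖ ^ 2 ≤ 4 * M ^ 2 * domi δ p := by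
  have h1 := Kker_norm_le δ V M hM hbound w hw p
  have h2 := Kker_norm_le δ V M hM hbound w₀ hw₀ p
  have h3 := norm_sub_le (Kker δ V w p) (Kker δ V w₀ p)
  have hsq : ∀ x : E3, (jap x ^ (-δ / 2)) ^ 2 = jap x ^ (-δ) := by
    intro x
    rw [← Real.rpow_natCast, ← Real.rpow_mul (jap_pos x).le]
    congr 1
    push_cast
    ring
  calc ‖Kker δ V w p - Kker δ V w₀ p‖ ^ 2
      ≤ (2 * (M * (jap p.1 ^ (-δ / 2) * jap p.2 ^ (-δ / 2) * ‖p.1 - p.2‖⁻¹))) ^ 2 := by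
        gcongr; linarith
    _ = 4 * M ^ 2 * ((jap p.1 ^ (-δ / 2)) ^ 2 * (jap p.2 ^ (-δ / 2)) ^ 2
        * ‖p.1 - p.2‖⁻¹ ^ 2) := by ring
    _ = 4 * M ^ 2 * (jap p.1 ^ (-δ) * jap p.2 ^ (-δ) * ‖p.1 - p.2‖⁻¹ ^ 2) := by
        rw [hsq, hsq]
    _ ≤ _ := by
        gcongr; exact le_domi δ hδ p

theorem main_tendsto (δ : ℝ) (hδ : 3 < δ) (V : E3 → ℂ) (hV : Measurable V)
    (M : ℝ) (hM : 0 < M) (hbound : ∀ x : E3, ‖V x‖ ≤ M * jap x ^ (-δ))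
    (w₀ : ℂ) (hw₀ : 0 ≤ w₀.im) :
    Tendsto (fun w : ℂ =>
          eLpNorm (fun p : E3 × E3 => Kker δ V w p - Kker δ V w₀ p) 2
            (volume : Measure (E3 × E3)))
        (𝓝[{w : ℂ | 0 ≤ w.im}] w₀) (𝓝 0) := by
  have key : Tendsto (fun w : ℂ => ∫⁻ p : E3 × E3, ‖Kker δ V w p - Kker δ V w₀ p‖ₑ ^ (2 : ℝ))
      (𝓝[{w : ℂ | 0 ≤ w.im}] w₀) (𝓝 (∫⁻ _ : E3 × E3, 0)) := by
    refine tendsto_lintegral_filter_of_dominated_convergence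
      (fun p => ENNReal.ofReal (4 * M ^ 2 * domi δ p)) ?_ ?_ ?_ ?_
    · refine Eventually.of_forall fun w => ?_
      exact ((((Kker_measurable δ V hV w).sub (Kker_measurable δ V hV w₀)).enorm).pow_const _)
    · filter_upwards [self_mem_nhdsWithin] with w hw
      refine Eventually.of_forall fun p => ?_
      rw [← ofReal_norm_eq_enorm, ENNReal.ofReal_rpow_of_nonneg (norm_nonneg _) (by norm_num)]
      apply ENNReal.ofReal_le_ofReal
      have := diff_bound δ hδ V M hM hbound w w₀ hw hw₀ p
      exact_mod_cast this
    · exact ((domi_integrable δ hδ).const_mul _).lintegral_lt_top.ne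
    · refine Eventually.of_forall fun p => ?_
      have hc : Continuous (fun w : ℂ => ‖Kker δ V w p - Kker δ V w₀ p‖ₑ ^ (2 : ℝ)) := by
        refine ENNReal.continuous_rpow_const.comp (Continuous.enorm ?_)
        unfold Kker
        fun_prop
      have := (hc.tendsto w₀).mono_left (nhdsWithin_le_nhds (s := {w : ℂ | 0 ≤ w.im}))
      simpa using this
  have h2 := (ENNReal.continuous_rpow_const (y := (1 / 2 : ℝ))).tendsto _ |>.comp key
  simp only [lintegral_zero] at h2
  rw [ENNReal.zero_rpow_of_pos (by norm_num)] at h2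
  refine h2.congr fun w => ?_
  rw [eLpNorm_eq_lintegral_rpow_enorm_toReal two_ne_zero ENNReal.ofNat_ne_top]
  simp

/-- Let `V : ℝ³ → ℂ` be measurable and short-range with exponent
`δ > 3`. Then `w ↦ K_w` is continuous from the closed upper half-plane into
`L²(ℝ³ × ℝ³)`; in particular, for every `λ > 0` and every sequence `w_n → ±√λ` with
`Im w_n ≥ 0`, the kernels `K_{w_n}` converge to `K_{±√λ}` in `L²(ℝ³ × ℝ³)`. -/
theorem stmt13 (δ : ℝ) (hδ : 3 < δ) (V : E3 → ℂ) (hV : Measurable V)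
    (M : ℝ) (hM : 0 < M) (hbound : ∀ x : E3, ‖V x‖ ≤ M * jap x ^ (-δ)) :
    (∀ w₀ : ℂ, 0 ≤ w₀.im →
      Tendsto (fun w : ℂ =>
          eLpNorm (fun p : E3 × E3 => Kker δ V w p - Kker δ V w₀ p) 2
            (volume : Measure (E3 × E3)))
        (𝓝[{w : ℂ | 0 ≤ w.im}] w₀) (𝓝 0)) ∧
    (∀ lam : ℝ, 0 < lam → ∀ s : ℝ, (s = Real.sqrt lam ∨ s = -Real.sqrt lam) →
      ∀ wn : ℕ → ℂ, (∀ n, 0 ≤ (wn n).im) → Tendsto wn atTop (𝓝 (s : ℂ)) →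
        Tendsto (fun n : ℕ =>
            eLpNorm (fun p : E3 × E3 => Kker δ V (wn n) p - Kker δ V (s : ℂ) p) 2
              (volume : Measure (E3 × E3)))
          atTop (𝓝 0)) := by
  refine ⟨fun w₀ hw₀ => main_tendsto δ hδ V hV M hM hbound w₀ hw₀, ?_⟩
  intro lam _ s _ wn hwn hlim
  exact (main_tendsto δ hδ V hV M hM hbound (s : ℂ) (by simp)).comp
    (tendsto_nhdsWithin_iff.2 ⟨hlim, Eventually.of_forall hwn⟩)
end

section
/- Let V : ℝ³ → ℂ be measurable and short-range with exponent δ > 3. Then ∫∫_{ℝ³×ℝ³} V(x) V(y) · cos(2μ |x − y|) · |x − y|^{-1} dx dy tends to 0 as the real parameter μ tends to +∞. -/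
open MeasureTheory Filter Topology

theorem RL_real (h : ℝ → ℝ) (hh : Integrable h) :
    Tendsto (fun μ : ℝ => ∫ t, h t * Real.cos (2 * μ * t)) atTop (𝓝 0) := by
  have h1 := Real.tendsto_integral_exp_smul_cocompact (fun t => (h t : ℂ))
  have h2 : Tendsto (fun μ : ℝ => μ / Real.pi) atTop (cocompact ℝ) :=
    (tendsto_id.atTop_div_const Real.pi_pos).mono_right atTop_le_cocompact
  have h3 := (Complex.continuous_re.tendsto 0).comp (h1.comp h2)
  simp only [Complex.zero_re] at h3
  refine h3.congr fun μ => ?_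
  simp only [Function.comp]
  rw [show (∫ v : ℝ, Real.fourierChar (-(v * (μ / Real.pi))) • (h v : ℂ)).re =
    ∫ v : ℝ, (Real.fourierChar (-(v * (μ / Real.pi))) • (h v : ℂ)).re from ?_]
  · refine integral_congr_ae (Eventually.of_forall fun t => ?_)
    simp only [Circle.smul_def, Real.fourierChar_apply, smul_eq_mul, Complex.mul_re,
      Complex.ofReal_re, Complex.ofReal_im, mul_zero, sub_zero, Complex.exp_ofReal_mul_I_re]
    rw [mul_comm]
    congr 1
    rw [← Real.cos_neg]
    congr 1
    field_simp
  · refine (integral_re (𝕜 := ℂ) ?_).symm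
    have := (Real.fourierIntegral_convergent_iff (V := ℝ) (μ := volume)
      (f := fun t => (h t : ℂ)) (μ / Real.pi)).2 hh.ofReal
    simpa [mul_comm] using this

theorem RL_push {X : Type*} [MeasurableSpace X] (ν : Measure X) (φ : X → ℝ) (hφ : Measurable φ)
    (hac : ∀ N : Set ℝ, MeasurableSet N → volume N = 0 → ν (φ ⁻¹' N) = 0)
    (g : X → ℝ) (hg : Integrable g ν) (hg0 : ∀ x, 0 ≤ g x) :
    Tendsto (fun μ : ℝ => ∫ x, g x * Real.cos (2 * μ * φ x) ∂ν) atTop (𝓝 0) := by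
  set ρ := ν.withDensity (fun x => ENNReal.ofReal (g x)) with hρ
  have hfin : IsFiniteMeasure ρ := isFiniteMeasure_withDensity_ofReal hg.2
  have hac' : ρ.map φ ≪ (volume : Measure ℝ) := by
    refine Measure.AbsolutelyContinuous.mk fun N hN h0 => ?_
    rw [Measure.map_apply hφ hN]
    exact withDensity_absolutelyContinuous _ _ (hac N hN h0)
  refine (RL_real (fun t => ((ρ.map φ).rnDeriv volume t).toReal)
    Measure.integrable_toReal_rnDeriv).congr fun μ => ?_
  have := integral_rnDeriv_smul (f := fun t => Real.cos (2 * μ * t)) hac'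
  simp only [smul_eq_mul] at this
  rw [this, integral_map hφ.aemeasurable (by fun_prop), hρ,
    integral_withDensity_eq_integral_toReal_smul₀ (by fun_prop) (by simp)]
  simp [hg0]

theorem RL_push_real {X : Type*} [MeasurableSpace X] (ν : Measure X) (φ : X → ℝ)
    (hφ : Measurable φ)
    (hac : ∀ N : Set ℝ, MeasurableSet N → volume N = 0 → ν (φ ⁻¹' N) = 0)
    (g : X → ℝ) (hg : Integrable g ν) :
    Tendsto (fun μ : ℝ => ∫ x, g x * Real.cos (2 * μ * φ x) ∂ν) atTop (𝓝 0) := by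
  have hi : ∀ (f : X → ℝ) (μ : ℝ), Integrable f ν →
      Integrable (fun x => f x * Real.cos (2 * μ * φ x)) ν := fun f μ hf =>
    hf.mul_bdd (c := 1) (by fun_prop) (Eventually.of_forall fun x => Real.abs_cos_le_one _)
  have h := (RL_push ν φ hφ hac _ hg.pos_part (fun x => le_max_right _ _)).sub
    (RL_push ν φ hφ hac _ hg.neg_part (fun x => le_max_right _ _))
  rw [sub_zero] at h
  refine h.congr fun μ => ?_
  rw [← integral_sub (hi _ μ hg.pos_part) (hi _ μ hg.neg_part)]
  refine integral_congr_ae (Eventually.of_forall fun x => ?_)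
  simp only
  rw [← sub_mul]
  congr 1
  rcases le_total 0 (g x) with h | h <;> simp [h]

theorem RL_push_complex {X : Type*} [MeasurableSpace X] (ν : Measure X) (φ : X → ℝ)
    (hφ : Measurable φ)
    (hac : ∀ N : Set ℝ, MeasurableSet N → volume N = 0 → ν (φ ⁻¹' N) = 0)
    (g : X → ℂ) (hg : Integrable g ν) :
    Tendsto (fun μ : ℝ => ∫ x, g x * ((Real.cos (2 * μ * φ x) : ℝ) : ℂ) ∂ν) atTop (𝓝 0) := by
  have hi : ∀ μ : ℝ, Integrable (fun x => g x * ((Real.cos (2 * μ * φ x) : ℝ) : ℂ)) ν := fun μ =>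
    hg.mul_bdd (c := 1) (by fun_prop) (Eventually.of_forall fun x => by
      rw [Complex.norm_real]; exact Real.abs_cos_le_one _)
  have hr := RL_push_real ν φ hφ hac _ hg.re
  have hm := RL_push_real ν φ hφ hac _ hg.im
  have h : Tendsto (fun μ : ℝ => ((∫ x, RCLike.re (g x) * Real.cos (2 * μ * φ x) ∂ν : ℝ) : ℂ) +
      ((∫ x, RCLike.im (g x) * Real.cos (2 * μ * φ x) ∂ν : ℝ) : ℂ) * Complex.I)
      atTop (𝓝 (((0 : ℝ) : ℂ) + ((0 : ℝ) : ℂ) * Complex.I)) :=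
    ((Complex.continuous_ofReal.tendsto 0).comp hr).add
      (((Complex.continuous_ofReal.tendsto 0).comp hm).mul_const _)
  simp only [Complex.ofReal_zero, zero_mul, add_zero] at h
  refine h.congr fun μ => ?_
  have := integral_re_add_im (𝕜 := ℂ) (hi μ)
  rw [← this]
  simp only [RCLike.re_eq_complex_re, RCLike.im_eq_complex_im, Complex.re_mul_ofReal,
    Complex.im_mul_ofReal]
  rfl

theorem norm_null (N : Set ℝ) (hN : MeasurableSet N) (h0 : volume N = 0) :
    volume ((fun z : E3 => ‖z‖) ⁻¹' N) = 0 := by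
  have hae : ∀ᵐ y : ℝ, N.indicator (fun _ => (1 : ℝ)) y = 0 := by
    have : ∀ᵐ y : ℝ, y ∉ N := measure_eq_zero_iff_ae_notMem.1 h0
    filter_upwards [this] with y hy
    simp [hy]
  have hi : Integrable (fun z : E3 => N.indicator (fun _ => (1 : ℝ)) ‖z‖) volume := by
    rw [integrable_fun_norm_addHaar volume (f := N.indicator (fun _ => (1 : ℝ)))]
    refine (integrable_zero ℝ ℝ (volume.restrict (Set.Ioi 0))).congr ?_
    filter_upwards [ae_restrict_of_ae hae] with y hy
    simp [hy]
  have hz : ∫ z : E3, N.indicator (fun _ => (1 : ℝ)) ‖z‖ = 0 := by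
    rw [integral_fun_norm_addHaar volume (N.indicator (fun _ => (1 : ℝ)))]
    rw [integral_eq_zero_of_ae]
    · simp
    filter_upwards [ae_restrict_of_ae hae] with y hy
    simp [hy]
  rw [integral_eq_zero_iff_of_nonneg
    (fun z => Set.indicator_nonneg (fun _ _ => zero_le_one) _) hi] at hz
  rw [measure_eq_zero_iff_ae_notMem]
  filter_upwards [hz] with z hz hm
  have hm' : ‖z‖ ∈ N := hm
  simp [hm'] at hz

theorem dist_null (N : Set ℝ) (hN : MeasurableSet N) (h0 : volume N = 0) :
    (volume : Measure (E3 × E3)) ((fun p : E3 × E3 => ‖p.1 - p.2‖) ⁻¹' N) = 0 := by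
  have hm : Measurable (fun p : E3 × E3 => ‖p.1 - p.2‖) := by fun_prop
  rw [Measure.volume_eq_prod]
  refine Measure.measure_prod_null_of_ae_null (hm hN) (Eventually.of_forall fun x => ?_)
  have := (Measure.measurePreserving_sub_left (volume : Measure E3) x).measure_preimage
    (s := (fun z : E3 => ‖z‖) ⁻¹' N) ((measurable_norm hN).nullMeasurableSet)
  rw [norm_null N hN h0] at this
  exact this

theorem ker_int : Integrable
    (fun z : E3 => (Set.Iio (1 : ℝ)).indicator (fun r => r⁻¹) ‖z‖) volume := by
  rw [integrable_fun_norm_addHaar volume (f := (Set.Iio (1 : ℝ)).indicator (fun r => r⁻¹))]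
  have h : Integrable ((Set.Ioc (0 : ℝ) 1).indicator (fun _ => (1 : ℝ))) :=
    (integrable_indicator_iff measurableSet_Ioc).2 (by simp)
  refine (h.integrableOn (s := Set.Ioi 0)).mono' ?_ ?_
  · refine Measurable.aestronglyMeasurable ?_
    exact (measurable_id.pow_const _).smul (measurable_inv.indicator measurableSet_Iio)
  · filter_upwards [ae_restrict_mem measurableSet_Ioi] with y hy
    have hy : 0 < y := hy
    by_cases h1 : y < 1
    · simp [h1, h1.le, hy, abs_of_pos hy]
      field_simp
      nlinarith
    · simp [h1]
      exact Set.indicator_nonneg (fun _ _ => zero_le_one) _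

theorem V_prod_int (V : E3 → ℂ) (hV : Measurable V) (hi : Integrable V) (M : ℝ)
    (hM : ∀ x, ‖V x‖ ≤ M) :
    Integrable (fun p : E3 × E3 => V p.1 * V p.2 * ((‖p.1 - p.2‖⁻¹ : ℝ) : ℂ)) := by
  have h1 := (hi.norm.mul_prod hi.norm)
  have h2 := (hi.norm.convolution_integrand (ContinuousLinearMap.mul ℝ ℝ) ker_int).const_mul M
  rw [Measure.volume_eq_prod]
  refine (h1.add h2).mono' (by fun_prop) (Eventually.of_forall fun p => ?_)
  simp only [Pi.add_apply, ContinuousLinearMap.mul_apply', norm_mul, Complex.norm_real, norm_inv,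
    norm_norm]
  have ha := norm_nonneg (V p.1)
  have hb := norm_nonneg (V p.2)
  have hk := inv_nonneg.2 (norm_nonneg (p.1 - p.2))
  have hab := mul_nonneg ha hb
  by_cases hlt : ‖p.1 - p.2‖ < 1
  · rw [Set.indicator_of_mem (show ‖p.1 - p.2‖ ∈ Set.Iio 1 from hlt)]
    have : ‖V p.1‖ * (‖V p.2‖ * ‖p.1 - p.2‖⁻¹) ≤ M * (‖V p.2‖ * ‖p.1 - p.2‖⁻¹) :=
      mul_le_mul_of_nonneg_right (hM _) (mul_nonneg hb hk)
    linarith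
  · rw [Set.indicator_of_notMem (show ‖p.1 - p.2‖ ∉ Set.Iio 1 from hlt)]
    have : ‖p.1 - p.2‖⁻¹ ≤ 1 := inv_le_one_of_one_le₀ (not_lt.1 hlt)
    nlinarith

/-- Let `V : ℝ³ → ℂ` be measurable and short-range with exponent
`δ > 3`. Then `∫∫ V(x)V(y) cos(2μ|x-y|) |x-y|⁻¹ dx dy → 0` as `μ → +∞`. -/
theorem stmt14 (δ : ℝ) (hδ : 3 < δ) (V : E3 → ℂ) (hV : Measurable V)
    (M : ℝ) (hM : 0 < M) (hbound : ∀ x : E3, ‖V x‖ ≤ M * jap x ^ (-δ)) :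
    Tendsto (fun μ : ℝ =>
        ∫ p : E3 × E3,
          V p.1 * V p.2 * ((Real.cos (2 * μ * ‖p.1 - p.2‖) : ℝ) : ℂ)
            * ((‖p.1 - p.2‖⁻¹ : ℝ) : ℂ))
      atTop (𝓝 0) := by
  have hjap : ∀ x : E3, jap x ^ (-δ) = (1 + ‖x‖ ^ 2) ^ (-δ / 2) := fun x => by
    rw [jap, Real.sqrt_eq_rpow, ← Real.rpow_mul (by positivity)]
    congr 1
    ring
  have hi : Integrable V := by
    refine ((integrable_rpow_neg_one_add_norm_sq (E := E3) (μ := volume) (r := δ)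
      (by simpa using hδ)).const_mul M).mono' hV.aestronglyMeasurable
      (Eventually.of_forall fun x => ?_)
    rw [← hjap]
    exact hbound x
  have hb : ∀ x, ‖V x‖ ≤ M := fun x => by
    refine (hbound x).trans (mul_le_of_le_one_right hM.le ?_)
    rw [hjap]
    exact Real.rpow_le_one_of_one_le_of_nonpos (by nlinarith [sq_nonneg ‖x‖]) (by linarith)
  refine (RL_push_complex volume (fun p : E3 × E3 => ‖p.1 - p.2‖) (by fun_prop) dist_null _
    (V_prod_int V hV hi M hb)).congr fun μ => ?_
  refine integral_congr_ae (Eventually.of_forall fun p => ?_)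
  simp only
  ring
end

section
/- Let λ0 ∈ ℝ, r > 0, let j ≥ 1 be an integer, and let g : ℂ → ℂ be holomorphic on the open disc D(λ0, r). Then for every smooth compactly supported function φ : ℝ → ℂ with support contained in (λ0 − r, λ0 + r), the limit lim_{ε→0⁺} ∫_ℝ φ(λ) · g(λ + iε) · (λ − λ0 + iε)^{-j} dλ exists in ℂ. -/
open Filter Topology

open MeasureTheory in
theorem aux_integrable (φ : ℝ → ℂ) (hφ : Continuous φ) (hc : HasCompactSupport φ)
    (f : ℝ → ℂ) (hf : ContinuousOn f (tsupport φ)) : Integrable (fun x => φ x * f x) := by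
  have h1 : IntegrableOn (fun x => φ x * f x) (tsupport φ) :=
    (hφ.continuousOn.mul hf).integrableOn_compact hc
  refine (integrableOn_iff_integrable_of_support_subset ?_).1 h1
  intro x hx
  apply subset_tsupport
  intro h0
  simp [h0] at hx

theorem aux_ne (a x ε : ℝ) (hε : 0 < ε) : (x : ℂ) - (a : ℂ) + (ε : ℂ) * Complex.I ≠ 0 := by
  intro h
  have := congrArg Complex.im h
  simp at this
  exact hε.ne' this

theorem aux_deriv (a ε x : ℝ) :
    HasDerivAt (fun x : ℝ => (x : ℂ) - (a : ℂ) + (ε : ℂ) * Complex.I) 1 x :=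
  ((Complex.ofRealCLM.hasDerivAt (x := x)).sub_const _).add_const _

open MeasureTheory in
theorem aux_ibp (φ : ℝ → ℂ) (hφ : ContDiff ℝ (⊤ : ℕ∞) φ) (hc : HasCompactSupport φ)
    (v v' : ℝ → ℂ) (hv : ∀ x, HasDerivAt v (v' x) x) (hv' : Continuous v') :
    ∫ x, φ x * v' x = - ∫ x, deriv φ x * v x := by
  have hvc : Continuous v := continuous_iff_continuousAt.2 fun x => (hv x).continuousAt
  have hd : Continuous (deriv φ) := hφ.continuous_deriv (by simp)
  exact integral_mul_deriv_eq_deriv_mul_of_integrable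
    (fun x _ => (hφ.differentiable (by simp) x).hasDerivAt) (fun x _ => hv x)
    (aux_integrable φ hφ.continuous hc _ hv'.continuousOn)
    (aux_integrable _ hd hc.deriv _ hvc.continuousOn)
    (aux_integrable φ hφ.continuous hc _ hvc.continuousOn)

open MeasureTheory in
theorem aux_log (a : ℝ) (φ : ℝ → ℂ) (hφ : Continuous φ) (hc : HasCompactSupport φ) :
    ∃ L : ℂ, Tendsto (fun ε : ℝ =>
        ∫ x : ℝ, φ x * Complex.log ((x : ℂ) - (a : ℂ) + (ε : ℂ) * Complex.I))
      (𝓝[>] (0 : ℝ)) (𝓝 L) := by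
  obtain ⟨R, hR0, hR⟩ : ∃ R : ℝ, 0 < R ∧ tsupport φ ⊆ Metric.closedBall a R := by
    obtain ⟨R, hR⟩ := hc.isCompact.isBounded.subset_closedBall a
    exact ⟨max R 1, by positivity, hR.trans (Metric.closedBall_subset_closedBall (le_max_left _ _))⟩
  refine ⟨∫ x : ℝ, φ x * (Real.log |x - a| + Complex.arg ((x - a : ℝ) : ℂ) * Complex.I), ?_⟩
  obtain ⟨C, hC⟩ := hφ.bounded_above_of_compact_support hc
  have hC0 : 0 ≤ C := (norm_nonneg _).trans (hC 0)
  let b : ℝ → ℝ := (Set.Icc (a - R) (a + R)).indicator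
    (fun x => C * (|Real.log (x - a)| + (R + 1) + Real.pi))
  apply tendsto_integral_filter_of_dominated_convergence b
  · filter_upwards [self_mem_nhdsWithin] with ε hε
    refine (aux_integrable φ hφ hc _ (Continuous.continuousOn ?_)).aestronglyMeasurable
    refine Continuous.clog (by fun_prop) fun x => Or.inr ?_
    simpa using (ne_of_gt hε)
  · have h1 : ∀ᶠ ε : ℝ in 𝓝[>] 0, ε < 1 := nhdsWithin_le_nhds (gt_mem_nhds one_pos)
    filter_upwards [self_mem_nhdsWithin, h1] with ε hε hε1
    have hε : 0 < ε := hε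
    have hae : ∀ᵐ x : ℝ, x ≠ a := by simp [ae_iff]
    filter_upwards [hae] with x hx
    by_cases hxs : x ∈ tsupport φ
    swap
    · rw [image_eq_zero_of_notMem_tsupport hxs]
      simp only [zero_mul, norm_zero]
      apply Set.indicator_nonneg
      intro x _
      positivity
    have hxR := hR hxs
    have hmem : x ∈ Set.Icc (a - R) (a + R) := by rwa [Real.closedBall_eq_Icc] at hxR
    have hxa : |x - a| ≤ R := by rwa [Metric.mem_closedBall, Real.dist_eq] at hxR
    have hxa0 : 0 < |x - a| := abs_pos.2 (sub_ne_zero.2 hx)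
    simp only [b, Set.indicator_of_mem hmem]
    rw [norm_mul]
    refine mul_le_mul (hC x) ?_ (norm_nonneg _) hC0
    set z : ℂ := (x : ℂ) - (a : ℂ) + (ε : ℂ) * Complex.I with hz
    have hre : z.re = x - a := by simp [hz]
    have him : z.im = ε := by simp [hz]
    have hl : |x - a| ≤ ‖z‖ := hre ▸ Complex.abs_re_le_norm z
    have hu : ‖z‖ ≤ R + 1 := by
      refine (Complex.norm_le_abs_re_add_abs_im z).trans ?_
      rw [hre, him, abs_of_pos hε]; linarith
    have hz0 : 0 < ‖z‖ := hxa0.trans_le hl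
    have h2 : ‖Complex.log z‖ ≤ |Real.log ‖z‖| + |Complex.arg z| := by
      have := Complex.norm_le_abs_re_add_abs_im (Complex.log z)
      rwa [Complex.log_re, Complex.log_im] at this
    have h3 := Complex.abs_arg_le_pi z
    have h4 : |Real.log ‖z‖| ≤ |Real.log (x - a)| + (R + 1) := by
      have h5 := Real.log_le_log hxa0 hl
      rw [Real.log_abs] at h5
      have h6 := Real.log_le_sub_one_of_pos hz0
      have h7 := neg_abs_le (Real.log (x - a))
      have h8 := abs_nonneg (Real.log (x - a))
      rw [abs_le]; constructor <;> linarith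
    linarith
  · rw [integrable_indicator_iff measurableSet_Icc]
    have h1 : IntervalIntegrable (fun x : ℝ => Real.log (x - a)) volume (a - R) (a + R) := by
      have := (intervalIntegral.intervalIntegrable_log' (a := -R) (b := R)).comp_sub_right a
      convert this using 1 <;> ring
    rw [intervalIntegrable_iff_integrableOn_Icc_of_le (by linarith)] at h1
    have hk : ∀ c : ℝ, IntegrableOn (fun _ : ℝ => c) (Set.Icc (a - R) (a + R)) := fun c =>
      continuousOn_const.integrableOn_compact isCompact_Icc
    exact ((h1.abs.add (hk _)).add (hk _)).const_mul C
  · have hae : ∀ᵐ x : ℝ, x ≠ a := by simp [ae_iff]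
    filter_upwards [hae] with x hx
    apply Tendsto.const_mul
    have hxa : x - a ≠ 0 := sub_ne_zero.2 hx
    have ht : Tendsto (fun ε : ℝ => (x : ℂ) - (a : ℂ) + (ε : ℂ) * Complex.I) (𝓝[>] 0)
        (𝓝 ((x - a : ℝ) : ℂ)) := by
      have : Continuous (fun ε : ℝ => (x : ℂ) - (a : ℂ) + (ε : ℂ) * Complex.I) := by fun_prop
      have h := this.tendsto 0
      simp only [Complex.ofReal_zero, zero_mul, add_zero] at h
      rw [Complex.ofReal_sub]
      exact h.mono_left nhdsWithin_le_nhds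
    rcases lt_or_gt_of_ne hxa with h | h
    · have h1 := Complex.tendsto_log_nhdsWithin_im_nonneg_of_re_neg_of_im_zero
        (z := ((x - a : ℝ) : ℂ)) (by simpa using h) (by simp)
      have h2 := h1.comp (tendsto_nhdsWithin_iff.2 ⟨ht, by
        filter_upwards [self_mem_nhdsWithin] with ε hε
        simpa using (le_of_lt hε)⟩)
      rw [Complex.arg_ofReal_of_neg h]
      simpa [Function.comp_def, Complex.norm_real, -Complex.ofReal_sub] using h2
    · have h1 := ht.clog (Complex.ofReal_mem_slitPlane.2 h)
      rw [Complex.arg_ofReal_of_nonneg h.le]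
      rw [← Complex.ofReal_log h.le] at h1
      simpa [abs_of_pos h, -Complex.ofReal_sub, Real.log_abs] using h1

open MeasureTheory in
theorem aux_pow (a : ℝ) (m : ℕ) : ∀ (φ : ℝ → ℂ), ContDiff ℝ (⊤ : ℕ∞) φ → HasCompactSupport φ →
    ∃ L : ℂ, Tendsto (fun ε : ℝ =>
        ∫ x : ℝ, φ x * (((x : ℂ) - (a : ℂ) + (ε : ℂ) * Complex.I) ^ (m + 1))⁻¹)
      (𝓝[>] (0 : ℝ)) (𝓝 L) := by
  induction m with
  | zero =>
    intro φ hφ hc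
    obtain ⟨L, hL⟩ := aux_log a (deriv φ) (hφ.continuous_deriv (by simp)) hc.deriv
    refine ⟨-L, hL.neg.congr' ?_⟩
    filter_upwards [self_mem_nhdsWithin] with ε hε
    have hne := fun x => aux_ne a x ε hε
    rw [← aux_ibp φ hφ hc _ (fun x : ℝ => (((x : ℂ) - (a : ℂ) + (ε : ℂ) * Complex.I) ^ (0 + 1))⁻¹)]
    · intro x
      have := (aux_deriv a ε x).clog_real (Or.inr (by simpa using (ne_of_gt hε)))
      simpa using this
    · exact Continuous.inv₀ (by fun_prop) fun x => pow_ne_zero _ (hne x)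
  | succ m ih =>
    intro φ hφ hc
    have hd : ContDiff ℝ (⊤ : ℕ∞) (deriv φ) := by
      have := (contDiff_infty_iff_deriv (f := φ)).1 hφ
      exact this.2
    obtain ⟨L, hL⟩ := ih (deriv φ) hd hc.deriv
    refine ⟨((m + 1 : ℕ) : ℂ)⁻¹ * L, (hL.const_mul _).congr' ?_⟩
    filter_upwards [self_mem_nhdsWithin] with ε hε
    have hne := fun x => aux_ne a x ε hε
    rw [aux_ibp φ hφ hc (fun x : ℝ => -((m + 1 : ℕ) : ℂ)⁻¹ *
      (((x : ℂ) - (a : ℂ) + (ε : ℂ) * Complex.I) ^ (m + 1))⁻¹)]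
    · rw [← integral_neg, ← integral_const_mul]
      congr 1; ext x; ring
    · intro x
      have := (((aux_deriv a ε x).pow (m + 1)).inv (pow_ne_zero _ (hne x))).const_mul
        (-((m + 1 : ℕ) : ℂ)⁻¹)
      refine this.congr_deriv ?_
      have hz := hne x
      have h2 : ((m + 1 : ℕ) : ℂ) ≠ 0 := by exact_mod_cast Nat.succ_ne_zero m
      simp only [Pi.pow_apply, add_tsub_cancel_right]
      generalize ((m + 1 : ℕ) : ℂ) = c at h2
      generalize (x : ℂ) - (a : ℂ) + (ε : ℂ) * Complex.I = z at hz
      field_simp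
      try ring
    · exact Continuous.inv₀ (by fun_prop) fun x => pow_ne_zero _ (hne x)

theorem aux_delta (a r : ℝ) (hr : 0 < r) (K : Set ℝ) (hK : IsClosed K)
    (hs : K ⊆ Set.Ioo (a - r) (a + r)) :
    ∃ s < r, ∃ δ > 0, ∀ x ∈ K, ∀ ε : ℝ, 0 ≤ ε → ε < δ →
      (x : ℂ) + (ε : ℂ) * Complex.I ∈ Metric.closedBall (a : ℂ) s := by
  rw [← Real.ball_eq_Ioo] at hs
  obtain ⟨ρ, hρ, h⟩ := exists_lt_subset_ball hK hs
  refine ⟨(ρ + r) / 2, by linarith, (r - ρ) / 2, by linarith, fun x hx ε h0 h1 => ?_⟩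
  have := h hx
  rw [Metric.mem_ball, Real.dist_eq] at this
  rw [Metric.mem_closedBall, Complex.dist_eq]
  refine (Complex.norm_le_abs_re_add_abs_im _).trans ?_
  simp [abs_of_nonneg h0]
  linarith

open MeasureTheory in
theorem aux_main (a r : ℝ) (hr : 0 < r) (φ : ℝ → ℂ) (hφ : ContDiff ℝ (⊤ : ℕ∞) φ)
    (hc : HasCompactSupport φ) (hs : tsupport φ ⊆ Set.Ioo (a - r) (a + r)) (j : ℕ) :
    ∀ g : ℂ → ℂ, DifferentiableOn ℂ g (Metric.ball (a : ℂ) r) →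
    ∃ L : ℂ, Tendsto (fun ε : ℝ =>
        ∫ x : ℝ, φ x * g ((x : ℂ) + (ε : ℂ) * Complex.I)
            * ((((x : ℂ) - (a : ℂ) + (ε : ℂ) * Complex.I)) ^ j)⁻¹)
      (𝓝[>] (0 : ℝ)) (𝓝 L) := by
  obtain ⟨s, hsr, δ, hδ, hK⟩ := aux_delta a r hr _ (isClosed_tsupport φ) hs
  have hsub : Metric.closedBall (a : ℂ) s ⊆ Metric.ball (a : ℂ) r :=
    Metric.closedBall_subset_ball hsr
  have hev : ∀ᶠ ε : ℝ in 𝓝[>] 0, ε < δ := nhdsWithin_le_nhds (gt_mem_nhds hδ)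
  have hcont : ∀ g : ℂ → ℂ, DifferentiableOn ℂ g (Metric.ball (a : ℂ) r) → ∀ ε : ℝ, 0 < ε → ε < δ →
      ContinuousOn (fun x : ℝ => g ((x : ℂ) + (ε : ℂ) * Complex.I)) (tsupport φ) := by
    intro g hg ε h0 h1
    refine hg.continuousOn.comp (f := fun x : ℝ => (x : ℂ) + (ε : ℂ) * Complex.I)
      (Continuous.continuousOn (by fun_prop)) ?_
    intro x hx
    exact hsub (hK x hx ε h0.le h1)
  induction j with
  | zero =>
    intro g hg
    obtain ⟨C, hC⟩ := (isCompact_closedBall (a : ℂ) s).exists_bound_of_continuousOn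
      (hg.continuousOn.mono hsub)
    simp only [pow_zero, inv_one, mul_one]
    refine ⟨∫ x : ℝ, φ x * g x, ?_⟩
    apply tendsto_integral_filter_of_dominated_convergence (fun x => ‖φ x‖ * C)
    · filter_upwards [self_mem_nhdsWithin, hev] with ε h0 h1
      exact (aux_integrable φ hφ.continuous hc _ (hcont g hg ε h0 h1)).aestronglyMeasurable
    · filter_upwards [self_mem_nhdsWithin, hev] with ε h0 h1
      refine Eventually.of_forall fun x => ?_
      by_cases hx : x ∈ tsupport φ
      · rw [norm_mul]
        exact mul_le_mul_of_nonneg_left (hC _ (hK x hx ε (le_of_lt h0) h1)) (norm_nonneg _)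
      · simp [image_eq_zero_of_notMem_tsupport hx]
    · exact (hφ.continuous.integrable_of_hasCompactSupport hc).norm.mul_const C
    · refine Eventually.of_forall fun x => ?_
      by_cases hx : x ∈ tsupport φ
      · apply Tendsto.const_mul
        have hm := hsub (hK x hx 0 le_rfl hδ)
        have hgc := (hg.continuousOn.continuousAt (Metric.isOpen_ball.mem_nhds hm)).tendsto
        have : Continuous (fun ε : ℝ => (x : ℂ) + (ε : ℂ) * Complex.I) := by fun_prop
        have h := hgc.comp (this.tendsto 0)
        simp only [Complex.ofReal_zero, zero_mul, add_zero] at h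
        exact h.mono_left nhdsWithin_le_nhds
      · simp [image_eq_zero_of_notMem_tsupport hx]
  | succ j ih =>
    intro g hg
    have hd : DifferentiableOn ℂ (dslope g a) (Metric.ball (a : ℂ) r) :=
      (Complex.differentiableOn_dslope (Metric.ball_mem_nhds _ hr)).2 hg
    obtain ⟨L1, h1⟩ := ih _ hd
    obtain ⟨L2, h2⟩ := aux_pow a j φ hφ hc
    refine ⟨L1 + g a * L2, (h1.add (h2.const_mul (g a))).congr' ?_⟩
    filter_upwards [self_mem_nhdsWithin, hev] with ε h0 h1
    have hne := fun x => aux_ne a x ε h0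
    have hinv : ∀ k : ℕ, Continuous
        (fun x : ℝ => (((x : ℂ) - (a : ℂ) + (ε : ℂ) * Complex.I) ^ k)⁻¹) := fun k =>
      Continuous.inv₀ (by fun_prop) fun x => pow_ne_zero _ (hne x)
    rw [← integral_const_mul, ← integral_add]
    · congr 1; ext x
      have hz := hne x
      have h3 := sub_smul_dslope g (a : ℂ) ((x : ℂ) + (ε : ℂ) * Complex.I)
      have h4 : g ((x : ℂ) + (ε : ℂ) * Complex.I) =
          ((x : ℂ) - (a : ℂ) + (ε : ℂ) * Complex.I) *
            dslope g a ((x : ℂ) + (ε : ℂ) * Complex.I) + g a := by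
        rw [smul_eq_mul] at h3
        linear_combination -h3
      rw [h4]
      generalize dslope g a ((x : ℂ) + (ε : ℂ) * Complex.I) = w
      generalize (x : ℂ) - (a : ℂ) + (ε : ℂ) * Complex.I = z at hz
      field_simp
      ring
    · have := aux_integrable φ hφ.continuous hc _
        ((hcont _ hd ε h0 h1).mul (hinv j).continuousOn)
      simpa only [mul_assoc, Pi.mul_apply] using this
    · exact (aux_integrable φ hφ.continuous hc _ (hinv (j + 1)).continuousOn).const_mul _

/-- Let `λ0 ∈ ℝ`, `r > 0`, `j ≥ 1` an integer, and `g : ℂ → ℂ`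
holomorphic on the open disc `D(λ0, r)`. Then for every smooth compactly supported
`φ : ℝ → ℂ` with support contained in `(λ0 - r, λ0 + r)`, the limit
`lim_{ε→0⁺} ∫_ℝ φ(λ) g(λ + iε) (λ - λ0 + iε)^{-j} dλ` exists in `ℂ`. -/
theorem stmt17 (lam0 r : ℝ) (hr : 0 < r) (j : ℕ) (hj : 1 ≤ j)
    (g : ℂ → ℂ) (hg : DifferentiableOn ℂ g (Metric.ball (lam0 : ℂ) r))
    (φ : ℝ → ℂ) (hφ : ContDiff ℝ (⊤ : ℕ∞) φ) (hφc : HasCompactSupport φ)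
    (hφsupp : tsupport φ ⊆ Set.Ioo (lam0 - r) (lam0 + r)) :
    ∃ L : ℂ, Tendsto (fun ε : ℝ =>
        ∫ lam : ℝ,
          φ lam * g ((lam : ℂ) + (ε : ℂ) * Complex.I)
            * ((((lam : ℂ) - (lam0 : ℂ) + (ε : ℂ) * Complex.I)) ^ j)⁻¹)
      (𝓝[>] (0 : ℝ)) (𝓝 L) := by
  exact aux_main lam0 r hr φ hφ hφc hφsupp j g hg
end
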